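/- Let n ≥ 1 and let H ∈ ℂ[x,y] be a polynomial of degree n+1 that is regular at infinity. If H has exactly one critical value, i.e. there exists γ ∈ ℂ such that H(x₀,y₀) = γ at every critical point (x₀,y₀) of H, then there exist α, β ∈ ℂ such that H(x,y) = Ĥ(x + α, y + β) + γ for all (x,y) ∈ ℂ², where Ĥ is the principal homogeneous part of H. -/

import Mathlib

open MvPolynomial Finset

/-- A polynomial `H` of degree `n+1` is regular at infinity if its principal
homogeneous part `Ĥ` has an isolated critical point at the origin: `(0,0)` is
the only common zero of `Ĥ_x` and `Ĥ_y` in `ℂ²`. -/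
def RegularAtInfinity (n : ℕ) (H : MvPolynomial (Fin 2) ℂ) : Prop :=
  ∀ x y : ℂ,
    eval ![x, y] (pderiv 0 (homogeneousComponent (n + 1) H)) = 0 →
    eval ![x, y] (pderiv 1 (homogeneousComponent (n + 1) H)) = 0 →
    x = 0 ∧ y = 0

set_option linter.all false

namespace Core
open scoped Ring in
open Polynomial in
theorem hensel_aux (R : Type*) [CommRing R] (I : Ideal R)
    [IsAdicComplete I R] (f : R[X]) (a₀ : R) (h₁ : f.eval a₀ ∈ I)
    (h₂ : IsUnit (Ideal.Quotient.mk I (f.derivative.eval a₀))) :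
    ∃ a : R, f.IsRoot a ∧ a - a₀ ∈ I := by
    classical
      let f' := derivative f
      let c : ℕ → R := fun n => Nat.recOn n a₀ fun _ b => b - f.eval b * (f'.eval b)⁻¹ʳ
      have hc : ∀ n, c (n + 1) = c n - f.eval (c n) * (f'.eval (c n))⁻¹ʳ := by
        intro n
        simp only [c]
      have hc_mod : ∀ n, c n ≡ a₀ [SMOD I] := by
        intro n
        induction n with
        | zero => rfl
        | succ n ih => ?_
        rw [hc, sub_eq_add_neg, ← add_zero a₀]
        refine ih.add ?_
        rw [SModEq.zero, Ideal.neg_mem_iff]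
        refine I.mul_mem_right _ ?_
        rw [← SModEq.zero] at h₁ ⊢
        exact (ih.eval f).trans h₁
      have hf'c : ∀ n, IsUnit (f'.eval (c n)) := by
        intro n
        have := isLocalHom_of_le_jacobson_bot I (IsAdicComplete.le_jacobson_bot I)
        apply IsUnit.of_map (Ideal.Quotient.mk I)
        convert! h₂ using 1
        exact SModEq.def.mp ((hc_mod n).eval _)
      have hfcI : ∀ n, f.eval (c n) ∈ I ^ (n + 1) := by
        intro n
        induction n with
        | zero => simpa only [Nat.rec_zero, zero_add, pow_one] using! h₁
        | succ n ih => ?_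
        rw [← taylor_eval_sub (c n), hc, sub_eq_add_neg, sub_eq_add_neg,
          add_neg_cancel_comm]
        rw [eval_eq_sum, sum_over_range' _ _ _ (lt_add_of_pos_right _ zero_lt_two), ←
          Finset.sum_range_add_sum_Ico _ (Nat.le_add_left _ _)]
        swap
        · intro i
          rw [zero_mul]
        refine Ideal.add_mem _ ?_ ?_
        · rw [← one_add_one_eq_two, Finset.sum_range_succ, Finset.range_one, Finset.sum_singleton,
            taylor_coeff_zero, taylor_coeff_one, pow_zero, pow_one, mul_one, mul_neg,
            mul_left_comm, Ring.mul_inverse_cancel _ (hf'c n), mul_one, add_neg_cancel]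
          exact Ideal.zero_mem _
        · refine Submodule.sum_mem _ ?_
          simp only [Finset.mem_Ico]
          rintro i ⟨h2i, _⟩
          have aux : n + 2 ≤ i * (n + 1) := by trans 2 * (n + 1) <;> nlinarith only [h2i]
          refine Ideal.mul_mem_left _ _ (Ideal.pow_le_pow_right aux ?_)
          rw [pow_mul']
          exact Ideal.pow_mem_pow ((Ideal.neg_mem_iff _).2 <| Ideal.mul_mem_right _ _ ih) _
      have aux : ∀ m n, m ≤ n → c m ≡ c n [SMOD (I ^ m • ⊤ : Ideal R)] := by
        intro m n hmn
        rw [← Ideal.one_eq_top, Ideal.smul_eq_mul, mul_one]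
        obtain ⟨k, rfl⟩ := Nat.exists_eq_add_of_le hmn
        clear hmn
        induction k with
        | zero => rw [add_zero]
        | succ k ih => ?_
        rw [← add_assoc, hc, ← add_zero (c m), sub_eq_add_neg]
        refine ih.add ?_
        symm
        rw [SModEq.zero, Ideal.neg_mem_iff]
        refine Ideal.mul_mem_right _ _ (Ideal.pow_le_pow_right ?_ (hfcI _))
        rw [add_assoc]
        exact le_self_add
      obtain ⟨a, ha⟩ := IsPrecomplete.prec' c (aux _ _)
      refine ⟨a, ?_, ?_⟩
      · show f.IsRoot a
        suffices ∀ n, f.eval a ≡ 0 [SMOD (I ^ n • ⊤ : Ideal R)] by exact IsHausdorff.haus' _ this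
        intro n
        specialize ha n
        rw [← Ideal.one_eq_top, Ideal.smul_eq_mul, mul_one] at ha ⊢
        refine (ha.symm.eval f).trans ?_
        rw [SModEq.zero]
        exact Ideal.pow_le_pow_right le_self_add (hfcI _)
      · show a - a₀ ∈ I
        specialize ha (0 + 1)
        rw [hc, pow_one, ← Ideal.one_eq_top, Ideal.smul_eq_mul, mul_one, sub_eq_add_neg] at ha
        rw [← SModEq.sub_mem, ← add_zero a₀]
        refine ha.symm.trans (SModEq.rfl.add ?_)
        rw [SModEq.zero, Ideal.neg_mem_iff]
        exact Ideal.mul_mem_right _ _ h₁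

theorem hensel (f : Polynomial (PowerSeries ℂ)) (a₀ : ℂ)
    (h1 : (f.map PowerSeries.constantCoeff).eval a₀ = 0)
    (h2 : (f.map PowerSeries.constantCoeff).derivative.eval a₀ ≠ 0) :
    ∃ α : PowerSeries ℂ, f.eval α = 0 ∧ PowerSeries.constantCoeff α = a₀ := by
  have key : ∀ g : Polynomial (PowerSeries ℂ), PowerSeries.constantCoeff (g.eval (PowerSeries.C a₀))
      = (g.map PowerSeries.constantCoeff).eval a₀ := by
    intro g
    rw [Polynomial.eval_map, Polynomial.eval, Polynomial.hom_eval₂]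
    simp
  obtain ⟨a, ha, hb⟩ := hensel_aux (PowerSeries ℂ) (Ideal.span {PowerSeries.X}) f (PowerSeries.C a₀)
    (by rw [Ideal.mem_span_singleton, PowerSeries.X_dvd_iff, key, h1])
    (by
      apply IsUnit.map
      rw [PowerSeries.isUnit_iff_constantCoeff, key, ← Polynomial.derivative_map]
      exact h2.isUnit)
  refine ⟨a, ha, ?_⟩
  rw [Ideal.mem_span_singleton, PowerSeries.X_dvd_iff] at hb
  simpa [sub_eq_zero] using hb

end Core

namespace Core

/-- substitution z ↦ z^N -/
noncomputable def ex (N : ℕ) (hN : N ≠ 0) : PowerSeries ℂ →+* PowerSeries ℂ :=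
  (PowerSeries.expand N hN : PowerSeries ℂ →ₐ[ℂ] PowerSeries ℂ).toRingHom

theorem ex_apply (N : ℕ) (hN : N ≠ 0) (f : PowerSeries ℂ) : ex N hN f = PowerSeries.expand N hN f := rfl
theorem ex_X (N : ℕ) (hN : N ≠ 0) : ex N hN PowerSeries.X = PowerSeries.X ^ N := by
  rw [ex_apply, PowerSeries.expand_X]
theorem ex_C (N : ℕ) (hN : N ≠ 0) (c : ℂ) : ex N hN (PowerSeries.C c) = PowerSeries.C c := by
  rw [ex_apply, PowerSeries.expand_C]
theorem ex_comp (p q : ℕ) (hp : p ≠ 0) (hq : q ≠ 0) :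
    (ex p hp).comp (ex q hq) = ex (p * q) (mul_ne_zero hp hq) := by
  ext1 f
  simp only [RingHom.comp_apply, ex_apply]
  rw [PowerSeries.expand_mul]
theorem ex_one : ex 1 one_ne_zero = RingHom.id _ := by
  ext1 f
  simp [ex_apply]
theorem cc_ex (N : ℕ) (hN : N ≠ 0) (f : PowerSeries ℂ) :
    PowerSeries.constantCoeff (ex N hN f) = PowerSeries.constantCoeff f := by
  rw [ex_apply, PowerSeries.constantCoeff_expand]

theorem map_taylor' {R S : Type*} [CommRing R] [CommRing S] (f : R →+* S) (p : Polynomial R) (r : R) :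
    (Polynomial.taylor r p).map f = Polynomial.taylor (f r) (p.map f) := by
  simp [Polynomial.taylor_apply, Polynomial.map_comp]

theorem low_mult (p : Polynomial ℂ) (m i : ℕ) (hm : 2 ≤ m) (hd : p.natDegree = m)
    (h1 : p.coeff (m-1) = 0) (him : i < m) (hi : p.coeff i ≠ 0) :
    ∃ a : ℂ, ∃ k, 1 ≤ k ∧ k < m ∧ (∀ j < k, (Polynomial.taylor a p).coeff j = 0) ∧
      (Polynomial.taylor a p).coeff k ≠ 0 := by
  classical
  have hp0 : p ≠ 0 := by rintro rfl; simp at hi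
  obtain ⟨a, ha⟩ := IsAlgClosed.exists_root p (by
    rw [Polynomial.degree_eq_natDegree hp0, hd]; norm_cast; omega)
  have hex : ∃ k, (Polynomial.taylor a p).coeff k ≠ 0 := by
    refine ⟨m, ?_⟩
    rw [← hd, Polynomial.taylor_coeff, ]
    have := Polynomial.coeff_taylor_natDegree (r := a) (f := p)
    rw [Polynomial.taylor_coeff] at this
    rw [this]
    exact Polynomial.leadingCoeff_ne_zero.mpr hp0
  refine ⟨a, Nat.find hex, ?_, ?_, ?_, Nat.find_spec hex⟩
  · rw [Nat.one_le_iff_ne_zero]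
    intro h
    have := Nat.find_spec hex
    rw [h] at this
    exact this (by rw [Polynomial.taylor_coeff_zero]; exact ha)
  · by_contra hcon
    push Not at hcon
    have hz : ∀ j < m, (Polynomial.taylor a p).coeff j = 0 := by
      intro j hj
      have := Nat.find_min hex (lt_of_lt_of_le hj hcon)
      simpa using this
    have hH : Polynomial.hasseDeriv (m-1) p = Polynomial.C (m * p.leadingCoeff) * Polynomial.X := by
      ext j
      rw [Polynomial.hasseDeriv_coeff]
      rcases j with _ | _ | j
      · simp [h1]
      · have : 0 + 1 + (m - 1) = m := by omega
        rw [this, show 0 + 1 = 1 from rfl, Polynomial.coeff_C_mul, Polynomial.coeff_X_one,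
          Polynomial.leadingCoeff, hd]
        have : Nat.choose m (m-1) = m := by
          rw [Nat.choose_symm (by omega : 1 ≤ m)]; simp
        rw [this]; simp
      · have : p.coeff (j + 1 + 1 + (m-1)) = 0 :=
          Polynomial.coeff_eq_zero_of_natDegree_lt (by omega)
        rw [this, Polynomial.coeff_C_mul, Polynomial.coeff_X]
        simp
    have h2 := hz (m-1) (by omega)
    rw [Polynomial.taylor_coeff, hH] at h2
    simp only [Polynomial.eval_mul, Polynomial.eval_C, Polynomial.eval_X, mul_eq_zero,
      Polynomial.leadingCoeff_eq_zero, hp0, or_false] at h2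
    rcases h2 with h2 | h2
    · norm_cast at h2; omega
    · subst h2
      have := hz i him
      rw [Polynomial.taylor_zero] at this
      exact hi this
  · intro j hj
    have := Nat.find_min hex hj
    simpa using this

theorem puiseux_root (m : ℕ) : 1 ≤ m → ∀ P : Polynomial (PowerSeries ℂ),
    (∀ i < m, PowerSeries.constantCoeff (P.coeff i) = 0) →
    PowerSeries.constantCoeff (P.coeff m) ≠ 0 →
    ∃ (N : ℕ) (hN : N ≠ 0) (α : PowerSeries ℂ), (P.map (ex N hN)).eval α = 0 := by
  classical
  induction m using Nat.strong_induction_on with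
  | _ m IH =>
  intro hm P h0 h1
  rcases Nat.eq_or_lt_of_le hm with hm1 | hm2
  · subst hm1
    obtain ⟨α, hα, -⟩ := hensel P 0 (by
      rw [← Polynomial.coeff_zero_eq_eval_zero, Polynomial.coeff_map]; exact h0 0 (by omega)) (by
      rw [← Polynomial.coeff_zero_eq_eval_zero, Polynomial.coeff_derivative, Polynomial.coeff_map]
      simpa using h1)
    exact ⟨1, one_ne_zero, α, by simpa [ex_one] using hα⟩
  obtain ⟨α0, hα0, hα0'⟩ := hensel (Polynomial.hasseDeriv (m-1) P) 0 (by
      rw [← Polynomial.coeff_zero_eq_eval_zero, Polynomial.coeff_map, Polynomial.hasseDeriv_coeff]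
      simp [h0 (m-1) (by omega)]) (by
      rw [← Polynomial.coeff_zero_eq_eval_zero, Polynomial.coeff_derivative, Polynomial.coeff_map,
        Polynomial.hasseDeriv_coeff]
      have : 0 + 1 + (m - 1) = m := by omega
      rw [this]
      have : Nat.choose m (m-1) = m := by
        rw [Nat.choose_symm (by omega : 1 ≤ m)]; simp
      rw [this]
      simp
      exact ⟨by omega, h1⟩)
  set Q := Polynomial.taylor α0 P with hQ
  have hQm1 : Q.coeff (m-1) = 0 := by rw [hQ, Polynomial.taylor_coeff, hα0]
  have hQcc : ∀ i, PowerSeries.constantCoeff (Q.coeff i) = PowerSeries.constantCoeff (P.coeff i) := by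
    intro i
    have : Q.map PowerSeries.constantCoeff = P.map PowerSeries.constantCoeff := by
      rw [hQ, map_taylor', hα0', Polynomial.taylor_zero]
    rw [← Polynomial.coeff_map, this, Polynomial.coeff_map]
  by_cases hQ0 : Q.coeff 0 = 0
  · refine ⟨1, one_ne_zero, α0, ?_⟩
    rw [hQ, Polynomial.taylor_coeff_zero] at hQ0
    simpa [ex_one] using hQ0
  obtain ⟨i, hi, hmin⟩ := Finset.exists_min_image ((Finset.range m).filter (fun i => Q.coeff i ≠ 0))
    (fun i => ((Q.coeff i).order.toNat : ℚ) / ((m - i : ℕ) : ℚ)) ⟨0, by simp [hQ0]; omega⟩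
  simp only [Finset.mem_filter, Finset.mem_range] at hi hmin
  obtain ⟨him, hiQ⟩ := hi
  have him1 : i ≠ m - 1 := by rintro rfl; exact hiQ hQm1
  set N := m - i with hNdef
  have hN : N ≠ 0 := by omega
  set k := (Q.coeff i).order.toNat with hk
  have hk1 : 1 ≤ k := by
    rw [Nat.one_le_iff_ne_zero]
    intro hk0
    have := PowerSeries.coeff_order hiQ
    rw [← hk, hk0, PowerSeries.coeff_zero_eq_constantCoeff_apply, hQcc] at this
    exact this (h0 i him)
  have hdiv : ∀ j, j ≤ m → (PowerSeries.X : PowerSeries ℂ) ^ (k * (m - j)) ∣ ex N hN (Q.coeff j) := by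
    intro j hj
    by_cases hj0 : Q.coeff j = 0
    · simp [hj0]
    rcases Nat.eq_or_lt_of_le hj with rfl | hj
    · simp
    have := hmin j ⟨hj, hj0⟩
    rw [div_le_div_iff₀ (by norm_cast; omega) (by norm_cast; omega)] at this
    have h2 : k * (m - j) ≤ (Q.coeff j).order.toNat * N := by exact_mod_cast this
    refine (pow_dvd_pow _ h2).trans ?_
    have := map_dvd (ex N hN) (PowerSeries.X_pow_order_dvd (φ := Q.coeff j))
    rw [map_pow, ex_X, ← pow_mul] at this
    rwa [mul_comm]
  set R := Q.map (ex N hN) with hR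
  set zk : PowerSeries ℂ := PowerSeries.X ^ k with hzk
  have hdiv2 : Polynomial.C ((PowerSeries.X : PowerSeries ℂ) ^ (k*m)) ∣
      R.comp (Polynomial.C zk * Polynomial.X) := by
    rw [Polynomial.C_dvd_iff_dvd_coeff]
    intro j
    rw [Polynomial.comp_C_mul_X_coeff, hR, Polynomial.coeff_map, hzk, ← pow_mul]
    rcases le_total j m with hj | hj
    · have : k * m = k * (m - j) + k * j := by rw [← mul_add]; congr 1; omega
      rw [this, pow_add]
      exact mul_dvd_mul (hdiv j hj) dvd_rfl
    · exact Dvd.dvd.mul_left (pow_dvd_pow _ (Nat.mul_le_mul_left _ hj)) _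
  obtain ⟨P', hP'⟩ := hdiv2
  have hcoef : ∀ j, ex N hN (Q.coeff j) * PowerSeries.X ^ (k * j) = PowerSeries.X ^ (k*m) * P'.coeff j := by
    intro j
    have := congrArg (fun p => p.coeff j) hP'
    simp only [Polynomial.coeff_C_mul] at this
    rw [Polynomial.comp_C_mul_X_coeff, hR, Polynomial.coeff_map, hzk, ← pow_mul] at this
    exact this
  have hXne : ∀ t, (PowerSeries.X : PowerSeries ℂ) ^ t ≠ 0 := fun t => pow_ne_zero _ PowerSeries.X_ne_zero
  have hPm : PowerSeries.constantCoeff (P'.coeff m) ≠ 0 := by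
    have := hcoef m
    rw [mul_comm] at this
    rw [← mul_left_cancel₀ (hXne _) this, cc_ex, hQcc]
    exact h1
  have hPgt : ∀ j, m < j → PowerSeries.constantCoeff (P'.coeff j) = 0 := by
    intro j hj
    have := hcoef j
    have e : k * j = k * m + k * (j - m) := by rw [← mul_add]; congr 1; omega
    rw [e, pow_add, mul_left_comm] at this
    rw [← mul_left_cancel₀ (hXne _) this, map_mul, map_pow, PowerSeries.constantCoeff_X, zero_pow, mul_zero]
    have : 1 ≤ j - m := by omega
    positivity
  have hPm1 : P'.coeff (m-1) = 0 := by
    have := hcoef (m-1)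
    rw [hQm1, map_zero, zero_mul] at this
    exact (mul_eq_zero.mp this.symm).resolve_left (hXne _)
  have hPi : PowerSeries.constantCoeff (P'.coeff i) ≠ 0 := by
    have := hcoef i
    have e : k * m = N * k + k * i := by rw [mul_comm N k, ← mul_add]; congr 1; omega
    rw [e, pow_add, mul_assoc, mul_comm (PowerSeries.X ^ (k*i)), ← mul_assoc] at this
    have := mul_right_cancel₀ (hXne _) this
    rw [← PowerSeries.X_pow_order_mul_divXPowOrder (f := Q.coeff i), map_mul, map_pow, ex_X, ← hk, ← pow_mul] at this
    have := mul_left_cancel₀ (hXne _) this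
    rw [← this, cc_ex, ne_eq, PowerSeries.constantCoeff_divXPowOrder_eq_zero_iff]
    exact hiQ
  have hdeg : (P'.map PowerSeries.constantCoeff).natDegree = m := by
    apply le_antisymm
    · rw [Polynomial.natDegree_le_iff_coeff_eq_zero]
      intro j hj
      rw [Polynomial.coeff_map, hPgt j hj]
    · apply Polynomial.le_natDegree_of_ne_zero
      rwa [Polynomial.coeff_map]
  obtain ⟨a, m', hm'1, hm'2, ha1, ha2⟩ := low_mult (P'.map PowerSeries.constantCoeff) m i hm2 hdeg
    (by rw [Polynomial.coeff_map, hPm1, map_zero]) him (by rwa [Polynomial.coeff_map])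
  have htay : (Polynomial.taylor (PowerSeries.C a) P').map PowerSeries.constantCoeff =
      Polynomial.taylor a (P'.map PowerSeries.constantCoeff) := by
    rw [map_taylor']; simp
  obtain ⟨N', hN', α', hα'⟩ := IH m' hm'2 hm'1 (Polynomial.taylor (PowerSeries.C a) P')
    (by intro j hj; rw [← Polynomial.coeff_map, htay, ha1 j hj])
    (by rw [← Polynomial.coeff_map, htay]; exact ha2)
  rw [map_taylor', Polynomial.taylor_eval] at hα'
  set e := ex N' hN' with he
  set α1 := α' + e (PowerSeries.C a)
  have h3 := congrArg (fun p => (Polynomial.map e p).eval α1) hP'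
  simp only [Polynomial.map_mul, Polynomial.eval_mul, hα', mul_zero, Polynomial.map_comp,
    Polynomial.eval_comp, Polynomial.map_C, Polynomial.map_X, Polynomial.eval_C, Polynomial.eval_X] at h3
  rw [hR, Polynomial.map_map, he, ex_comp, hQ, map_taylor', Polynomial.taylor_eval] at h3
  exact ⟨_, _, _, h3⟩

theorem puiseux_split (d : ℕ) : ∀ P : Polynomial (PowerSeries ℂ), P.Monic → P.natDegree = d →
    ∃ (N : ℕ) (hN : N ≠ 0) (α : Fin d → PowerSeries ℂ),
      P.map (ex N hN) = ∏ i, (Polynomial.X - Polynomial.C (α i)) := by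
  induction d with
  | zero =>
    intro P hP hd
    refine ⟨1, one_ne_zero, Fin.elim0, ?_⟩
    rw [hP.natDegree_eq_zero.mp hd]
    simp
  | succ d IH =>
    intro P hP hd
    classical
    set p := P.map PowerSeries.constantCoeff with hp
    have hpm : p.Monic := hP.map _
    have hpd : p.natDegree = d + 1 := by rw [hp, hP.natDegree_map, hd]
    obtain ⟨a, ha⟩ := IsAlgClosed.exists_root p (by
      rw [Polynomial.degree_eq_natDegree hpm.ne_zero, hpd]; norm_cast)
    have hex : ∃ k, (Polynomial.taylor a p).coeff k ≠ 0 := by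
      refine ⟨p.natDegree, ?_⟩
      rw [Polynomial.coeff_taylor_natDegree, hpm.leadingCoeff]
      exact one_ne_zero
    have htay : (Polynomial.taylor (PowerSeries.C a) P).map PowerSeries.constantCoeff =
        Polynomial.taylor a p := by
      rw [map_taylor', hp]; simp
    obtain ⟨N, hN, α, hα⟩ := puiseux_root (Nat.find hex) (by
      rw [Nat.one_le_iff_ne_zero]
      intro h
      have := Nat.find_spec hex
      rw [h] at this
      exact this (by rw [Polynomial.taylor_coeff_zero]; exact ha))
      (Polynomial.taylor (PowerSeries.C a) P)
      (by
        intro j hj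
        rw [← Polynomial.coeff_map, htay]
        simpa using Nat.find_min hex hj)
      (by rw [← Polynomial.coeff_map, htay]; exact Nat.find_spec hex)
    rw [map_taylor', Polynomial.taylor_eval] at hα
    set β := α + ex N hN (PowerSeries.C a)
    obtain ⟨Q, hQ⟩ := Polynomial.dvd_iff_isRoot.mpr hα
    have hQm : Q.Monic := (Polynomial.monic_X_sub_C β).of_mul_monic_left (hQ ▸ hP.map _)
    have hQd : Q.natDegree = d := by
      have := congrArg Polynomial.natDegree hQ
      rw [hP.natDegree_map, hd, (Polynomial.monic_X_sub_C β).natDegree_mul hQm,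
        Polynomial.natDegree_X_sub_C] at this
      omega
    obtain ⟨N', hN', γ, hγ⟩ := IH Q hQm hQd
    refine ⟨N' * N, mul_ne_zero hN' hN, Fin.cons (ex N' hN' β) γ, ?_⟩
    rw [← ex_comp N' N hN' hN, ← Polynomial.map_map, hQ, Polynomial.map_mul, hγ, Fin.prod_univ_succ]
    simp

end Core

namespace Core

/-- ℂ[X][Y] -/
abbrev BP := Polynomial (Polynomial ℂ)
/-- Laurent series -/
abbrev LS := LaurentSeries ℂ

section generic
variable {L : Type*} [CommRing L] [Algebra ℂ L]

/-- evaluate polynomials in X at t -/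
noncomputable def th (t : L) : Polynomial ℂ →+* L := (Polynomial.aeval t : Polynomial ℂ →ₐ[ℂ] L).toRingHom

theorem th_apply (t : L) (f : Polynomial ℂ) : th t f = Polynomial.aeval t f := rfl
@[simp] theorem th_X (t : L) : th t Polynomial.X = t := by simp [th_apply]
@[simp] theorem th_C (t : L) (c : ℂ) : th t (Polynomial.C c) = algebraMap ℂ L c := by simp [th_apply]

/-- evaluate bivariate polynomials at (t,y) -/
noncomputable def pe (t y : L) : BP →+* L := Polynomial.eval₂RingHom (th t) y

theorem pe_apply (t y : L) (b : BP) : pe t y b = (b.map (th t)).eval y := by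
  simp [pe, Polynomial.eval_map]
@[simp] theorem pe_X (t y : L) : pe t y Polynomial.X = y := by simp [pe]
@[simp] theorem pe_C (t y : L) (f : Polynomial ℂ) : pe t y (Polynomial.C f) = th t f := by simp [pe]

/-- coefficientwise derivative -/
noncomputable def Dx (b : BP) : BP := b.sum fun k c => Polynomial.monomial k (Polynomial.derivative c)

theorem coeff_Dx (b : BP) (k : ℕ) : (Dx b).coeff k = Polynomial.derivative (b.coeff k) := by
  rw [Dx, Polynomial.sum_def, Polynomial.finset_sum_coeff]
  simp only [Polynomial.coeff_monomial]
  rw [Finset.sum_ite_eq']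
  split_ifs with h
  · rfl
  · rw [Polynomial.notMem_support_iff.mp h]; simp

theorem Dx_add (a b : BP) : Dx (a + b) = Dx a + Dx b := by
  ext1 k; simp [coeff_Dx]
theorem Dx_sub (a b : BP) : Dx (a - b) = Dx a - Dx b := by
  ext1 k; simp [coeff_Dx]
theorem Dx_Cmul (c : ℂ) (b : BP) : Dx (Polynomial.C (Polynomial.C c) * b) = Polynomial.C (Polynomial.C c) * Dx b := by
  ext1 k; simp [coeff_Dx]
theorem Dx_C (c : Polynomial ℂ) : Dx (Polynomial.C c) = Polynomial.C (Polynomial.derivative c) := by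
  ext1 k; rw [coeff_Dx, Polynomial.coeff_C, Polynomial.coeff_C]; split_ifs <;> simp
theorem Dx_monomial (k : ℕ) (c : Polynomial ℂ) : Dx (Polynomial.monomial k c) = Polynomial.monomial k (Polynomial.derivative c) := by
  ext1 j; rw [coeff_Dx, Polynomial.coeff_monomial, Polynomial.coeff_monomial]; split_ifs <;> simp

theorem der_pe (δ : Derivation ℂ L L) (t y : L) (b : BP) :
    δ (pe t y b) = pe t y (Dx b) * δ t + pe t y (Polynomial.derivative b) * δ y := by
  induction b using Polynomial.induction_on' with
  | add p q hp hq => simp only [map_add, hp, hq, Dx_add]; ring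
  | monomial k c =>
    rw [Dx_monomial, Polynomial.derivative_monomial]
    simp only [pe, Polynomial.coe_eval₂RingHom, Polynomial.eval₂_monomial]
    rw [Derivation.leibniz, Derivation.leibniz_pow, th_apply, th_apply, Derivation.map_aeval]
    simp only [smul_eq_mul, nsmul_eq_mul, map_mul, map_natCast]
    rw [th_apply]
    ring

theorem th_map {L' : Type*} [CommRing L'] [Algebra ℂ L'] (φ : L →+* L')
    (hφ : ∀ c : ℂ, φ (algebraMap ℂ L c) = algebraMap ℂ L' c) (t : L) (f : Polynomial ℂ) :
    φ (th t f) = th (φ t) f := by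
  have : φ.comp (th t) = th (φ t) := by
    apply Polynomial.ringHom_ext
    · intro a; simp [hφ]
    · simp
  exact congrArg (fun g => g f) this

theorem pe_map {L' : Type*} [CommRing L'] [Algebra ℂ L'] (φ : L →+* L')
    (hφ : ∀ c : ℂ, φ (algebraMap ℂ L c) = algebraMap ℂ L' c) (t y : L) (b : BP) :
    φ (pe t y b) = pe (φ t) (φ y) b := by
  have : φ.comp (pe t y) = pe (φ t) (φ y) := by
    apply Polynomial.ringHom_ext
    · intro a; simp [th_map φ hφ]
    · simp
  exact congrArg (fun g => g b) this
end generic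

theorem th_eval (x0 : ℂ) (f : Polynomial ℂ) : th x0 f = f.eval x0 := by
  rw [th_apply, Polynomial.coe_aeval_eq_eval]

theorem th_eq_evalRingHom (x0 : ℂ) : th x0 = Polynomial.evalRingHom x0 := by
  exact RingHom.ext (th_eval x0)

/-! ### Finite places -/
/-- local coordinate at x0 -/
noncomputable def tz (x0 : ℂ) (N : ℕ) : PowerSeries ℂ := PowerSeries.C x0 + PowerSeries.X ^ N

theorem puiseux (p : BP) (hp : p.Monic) (x0 : ℂ) : ∃ (N : ℕ) (hN : N ≠ 0) (α : Fin p.natDegree → PowerSeries ℂ),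
    p.map (th (tz x0 N)) = ∏ i, (Polynomial.X - Polynomial.C (α i)) := by
  obtain ⟨N, hN, α, hα⟩ := puiseux_split p.natDegree (p.map (th (tz x0 1))) (hp.map _) (hp.natDegree_map _)
  refine ⟨N, hN, α, ?_⟩
  rw [← hα, Polynomial.map_map]
  congr 1
  apply Polynomial.ringHom_ext
  · intro a
    simp only [th_C, RingHom.comp_apply]
    exact (ex_C N hN a).symm
  · simp [tz, ex_X, ex_C]

theorem cc_th (x0 : ℂ) (N : ℕ) (hN : N ≠ 0) (f : Polynomial ℂ) :
    PowerSeries.constantCoeff (th (tz x0 N) f) = f.eval x0 := by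
  rw [th_map (PowerSeries.constantCoeff (R := ℂ)) (fun c => PowerSeries.constantCoeff_C c), ← th_eval]
  simp [tz, hN]

theorem cc_pe (x0 : ℂ) (N : ℕ) (hN : N ≠ 0) (α : PowerSeries ℂ) (b : BP) :
    PowerSeries.constantCoeff (pe (tz x0 N) α b) = pe x0 (PowerSeries.constantCoeff α) b := by
  rw [pe_map (PowerSeries.constantCoeff (R := ℂ)) (fun c => PowerSeries.constantCoeff_C c)]
  simp [tz, hN]

theorem order_th (x0 : ℂ) (N : ℕ) (hN : N ≠ 0) (f : Polynomial ℂ) (hf : f ≠ 0) :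
    (th (tz x0 N) f).order = (N * f.rootMultiplicity x0 : ℕ) := by
  obtain ⟨g, hg, hg2⟩ := Polynomial.exists_eq_pow_rootMultiplicity_mul_and_not_dvd f hf x0
  conv_lhs => rw [hg]
  rw [map_mul, map_pow, PowerSeries.order_mul]
  have h1 : th (tz x0 N) (Polynomial.X - Polynomial.C x0) = PowerSeries.X ^ N := by
    rw [map_sub, th_X, th_C, tz]
    exact add_sub_cancel_left _ _
  have h2 : (th (tz x0 N) g).order = 0 := by
    by_contra h
    rw [← ne_eq, PowerSeries.order_ne_zero_iff_constCoeff_eq_zero, cc_th _ _ hN] at h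
    exact hg2 (Polynomial.dvd_iff_isRoot.mpr h)
  rw [h1, h2, ← pow_mul, PowerSeries.order_X_pow, add_zero]

theorem th_inj (x0 : ℂ) (N : ℕ) (hN : N ≠ 0) (f : Polynomial ℂ) (hf : th (tz x0 N) f = 0) : f = 0 := by
  by_contra h
  have := order_th x0 N hN f h
  rw [hf, PowerSeries.order_zero] at this
  exact ENat.top_ne_coe _ this

/-- z d/dz -/
noncomputable def dl : Derivation ℂ (PowerSeries ℂ) (PowerSeries ℂ) := PowerSeries.X (R := ℂ) • PowerSeries.derivative ℂ

theorem coeff_dl (f : PowerSeries ℂ) (k : ℕ) : PowerSeries.coeff k (dl f) = k * PowerSeries.coeff k f := by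
  simp only [dl, Derivation.smul_apply, smul_eq_mul]
  rcases k with _ | k
  · simp
  · rw [PowerSeries.coeff_succ_X_mul, PowerSeries.coeff_derivative]; push_cast; ring

theorem cc_dl (f : PowerSeries ℂ) : PowerSeries.constantCoeff (dl f) = 0 := by
  rw [← PowerSeries.coeff_zero_eq_constantCoeff_apply, coeff_dl]; simp

theorem order_dl (f : PowerSeries ℂ) (hf : PowerSeries.constantCoeff f = 0) : (dl f).order = f.order := by
  have key : ∀ k, PowerSeries.coeff k (dl f) = 0 ↔ PowerSeries.coeff k f = 0 := by
    intro k
    rw [coeff_dl]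
    rcases k with _ | k
    · simp [hf]
    · rw [mul_eq_zero, or_iff_right]; exact_mod_cast Nat.succ_ne_zero k
  apply le_antisymm
  · apply PowerSeries.le_order
    intro i hi
    exact (key i).mp (PowerSeries.coeff_of_lt_order _ hi)
  · apply PowerSeries.le_order
    intro i hi
    exact (key i).mpr (PowerSeries.coeff_of_lt_order _ hi)

theorem dl_tz (x0 : ℂ) (N : ℕ) : dl (tz x0 N) = (N : PowerSeries ℂ) * PowerSeries.X ^ N := by
  ext k
  rw [coeff_dl, tz, map_add, PowerSeries.coeff_C, PowerSeries.coeff_X_pow,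
    show (N : PowerSeries ℂ) = PowerSeries.C (N : ℂ) by simp, PowerSeries.coeff_C_mul, PowerSeries.coeff_X_pow]
  rcases eq_or_ne k N with rfl | h2
  · rcases eq_or_ne k 0 with rfl | h
    · simp
    · simp [h]
  · rcases eq_or_ne k 0 with rfl | h
    · simp [h2]
    · simp [h, h2]

theorem dl_pe (x0 : ℂ) (N : ℕ) (α : PowerSeries ℂ) (b : BP) :
    dl (pe (tz x0 N) α b) = pe (tz x0 N) α (Dx b) * ((N : PowerSeries ℂ) * PowerSeries.X ^ N) +
      pe (tz x0 N) α (Polynomial.derivative b) * dl α := by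
  rw [der_pe, dl_tz]

end Core

namespace Core

noncomputable instance instLSAlg : Algebra ℂ LS := HahnSeries.instAlgebra

/-- embedding of power series -/
noncomputable abbrev io : PowerSeries ℂ →+* LS := HahnSeries.ofPowerSeries ℤ ℂ
/-- the uniformizer -/
noncomputable def zL : LS := io PowerSeries.X

theorem io_inj : Function.Injective io := HahnSeries.ofPowerSeries_injective
theorem zL_ne : zL ≠ 0 := by
  intro h
  exact PowerSeries.X_ne_zero (io_inj (h.trans (map_zero _).symm))
theorem io_C (c : ℂ) : io (PowerSeries.C c) = algebraMap ℂ LS c := by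
  rw [HahnSeries.ofPowerSeries_C, HahnSeries.algebraMap_apply]; rfl
theorem zL_single : zL = HahnSeries.single 1 1 := by rw [zL, HahnSeries.ofPowerSeries_X]

/-- z d/dz on Laurent series, underlying function -/
noncomputable def dLf (x : LS) : LS where
  coeff k := (k : ℂ) * x.coeff k
  isPWO_support' := x.isPWO_support.mono (by
    intro k hk
    simp only [Function.mem_support] at hk
    exact right_ne_zero_of_mul hk)

theorem dLf_support (x : LS) : (dLf x).support ⊆ x.support := by
  intro k hk
  exact right_ne_zero_of_mul hk

theorem dLf_mul (x y : LS) : dLf (x * y) = x * dLf y + y * dLf x := by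
  rw [mul_comm y]
  ext k
  rw [HahnSeries.coeff_add, HahnSeries.coeff_mul_left' x.isPWO_support (dLf_support x),
    HahnSeries.coeff_mul_right' y.isPWO_support (dLf_support y)]
  show (k : ℂ) * (x*y).coeff k = _
  rw [HahnSeries.coeff_mul, Finset.mul_sum, ← Finset.sum_add_distrib]
  apply Finset.sum_congr rfl
  rintro ⟨i, j⟩ hij
  rw [Finset.mem_antidiagonal] at hij
  obtain ⟨-, -, h⟩ := hij
  simp only at h
  show _ = x.coeff i * ((j : ℂ) * y.coeff j) + ((i : ℂ) * x.coeff i) * y.coeff j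
  rw [← h]; push_cast; ring

/-- z d/dz on Laurent series -/
noncomputable def dL : Derivation ℂ LS LS := Derivation.mk'
  { toFun := dLf
    map_add' := by
      intro x y; ext k
      show (k : ℂ) * (x + y).coeff k = (k : ℂ) * x.coeff k + (k : ℂ) * y.coeff k
      rw [HahnSeries.coeff_add, mul_add]
    map_smul' := by
      intro c x; ext k
      show (k : ℂ) * (c * x.coeff k) = c * ((k : ℂ) * x.coeff k)
      ring } (by intro a b; exact dLf_mul a b)

theorem coeff_dL (x : LS) (k : ℤ) : (dL x).coeff k = (k : ℂ) * x.coeff k := rfl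

theorem dL_eq_zero (x : LS) (h : dL x = 0) : ∃ c : ℂ, x = algebraMap ℂ LS c := by
  refine ⟨x.coeff 0, ?_⟩
  ext k
  rw [HahnSeries.algebraMap_apply]
  have := congrArg (fun y => HahnSeries.coeff y k) h
  simp only [coeff_dL, HahnSeries.coeff_zero, mul_eq_zero, Int.cast_eq_zero] at this
  by_cases hk : k = 0
  · subst hk; simp [HahnSeries.C_apply]
  · rw [this.resolve_left hk]
    simp [HahnSeries.C_apply, HahnSeries.coeff_single, hk]

theorem dL_io (f : PowerSeries ℂ) : dL (io f) = io (dl f) := by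
  ext k
  rw [coeff_dL]
  rcases lt_or_ge k 0 with hk | hk
  · rw [PowerSeries.coeff_coe, PowerSeries.coeff_coe, if_pos hk, if_pos hk, mul_zero]
  · obtain ⟨k, rfl⟩ := Int.eq_ofNat_of_zero_le hk
    rw [PowerSeries.coeff_coe, PowerSeries.coeff_coe]
    simp [coeff_dl]

theorem dL_zL : dL zL = zL := by
  ext k
  rw [coeff_dL, zL_single, HahnSeries.coeff_single]
  split_ifs with h
  · simp [h]
  · simp

theorem dL_zLinv : dL zL⁻¹ = - zL⁻¹ := by
  have h : dL (zL * zL⁻¹) = 0 := by rw [mul_inv_cancel₀ zL_ne]; simp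
  rw [Derivation.leibniz, dL_zL] at h
  simp only [smul_eq_mul] at h
  have h2 : zL * (dL zL⁻¹ + zL⁻¹) = 0 := by linear_combination h
  have := (mul_eq_zero.mp h2).resolve_left zL_ne
  linear_combination this

/-- comparing orders -/
theorem io_zL_cmp (u v : PowerSeries ℂ) (a b : ℕ) (hu : PowerSeries.constantCoeff u ≠ 0)
    (hv : PowerSeries.constantCoeff v ≠ 0) (h : io u * zL ^ a = io v * zL ^ b) : a = b := by
  rw [zL, ← map_pow, ← map_pow, ← map_mul, ← map_mul] at h
  have h := congrArg PowerSeries.order (io_inj h)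
  rw [PowerSeries.order_mul, PowerSeries.order_mul, PowerSeries.order_X_pow, PowerSeries.order_X_pow] at h
  have hz : ∀ w : PowerSeries ℂ, PowerSeries.constantCoeff w ≠ 0 → w.order = 0 := by
    intro w hw
    by_contra h
    exact hw (PowerSeries.order_ne_zero_iff_constCoeff_eq_zero.mp h)
  rw [hz u hu, hz v hv, zero_add, zero_add] at h
  exact_mod_cast h

/-- total degree at most M -/
def TD (b : BP) (M : ℕ) : Prop := ∀ k j, M < k + j → (b.coeff k).coeff j = 0

/-- degree M form of b, at X = 1 -/
noncomputable def tp (M : ℕ) (b : BP) : Polynomial ℂ :=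
  ∑ k ∈ Finset.range (M+1), Polynomial.monomial k ((b.coeff k).coeff (M-k))

/-- homogenization -/
noncomputable def hm (M : ℕ) (b : BP) : BP :=
  ∑ k ∈ Finset.range (M+1), Polynomial.monomial k (Polynomial.reflect (M-k) (b.coeff k))

theorem coeff_tp (M : ℕ) (b : BP) (k : ℕ) : (tp M b).coeff k = if k ≤ M then (b.coeff k).coeff (M-k) else 0 := by
  rw [tp, Polynomial.finset_sum_coeff]
  simp only [Polynomial.coeff_monomial]
  rw [Finset.sum_ite_eq']
  simp [Nat.lt_succ_iff]

theorem coeff_hm (M : ℕ) (b : BP) (k : ℕ) :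
    (hm M b).coeff k = if k ≤ M then Polynomial.reflect (M-k) (b.coeff k) else 0 := by
  rw [hm, Polynomial.finset_sum_coeff]
  simp only [Polynomial.coeff_monomial]
  rw [Finset.sum_ite_eq']
  simp [Nat.lt_succ_iff]

theorem TD.natDegree_coeff {b : BP} {M : ℕ} (h : TD b M) (k : ℕ) : (b.coeff k).natDegree ≤ M - k := by
  rw [Polynomial.natDegree_le_iff_coeff_eq_zero]
  intro j hj
  exact h k j (by omega)

theorem TD.natDegree_le {b : BP} {M : ℕ} (h : TD b M) : b.natDegree ≤ M := by
  rw [Polynomial.natDegree_le_iff_coeff_eq_zero]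
  intro k hk
  ext j
  exact h k j (by omega)

theorem th_hm (N : ℕ) (m : ℕ) (f : Polynomial ℂ) (hf : f.natDegree ≤ m) :
    th (zL⁻¹ ^ N) f * zL ^ (N * m) = io (th (tz 0 N) (Polynomial.reflect m f)) := by
  rw [th_map io io_C]
  have h0 : io (tz 0 N) = zL ^ N := by simp only [tz, map_zero, zero_add, map_pow]; rfl
  rw [h0]
  have hne : zL⁻¹ ^ N ≠ 0 := pow_ne_zero _ (inv_ne_zero zL_ne)
  letI : Invertible (zL⁻¹ ^ N) := invertibleOfNonzero hne
  have := Polynomial.eval₂_reflect_mul_pow (algebraMap ℂ LS) (zL⁻¹ ^ N) m f hf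
  rw [th_apply, th_apply, Polynomial.aeval_def, Polynomial.aeval_def, ← this]
  rw [invOf_eq_inv, inv_pow, inv_inv, mul_assoc, pow_mul, ← mul_pow, inv_mul_cancel₀ (pow_ne_zero _ zL_ne), one_pow, mul_one]

theorem inf_eval (N M : ℕ) (b : BP) (hb : TD b M) (β : PowerSeries ℂ) :
    pe (zL⁻¹ ^ N) (zL⁻¹ ^ N * io β) b * zL ^ (N * M) = io (pe (tz 0 N) β (hm M b)) := by
  have hb' : b = ∑ k ∈ Finset.range (M+1), Polynomial.monomial k (b.coeff k) :=
    b.as_sum_range' (M+1) (Nat.lt_succ_of_le hb.natDegree_le)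
  conv_lhs => rw [hb']
  rw [hm, map_sum, map_sum, map_sum, Finset.sum_mul]
  apply Finset.sum_congr rfl
  intro k hk
  have hk : k ≤ M := by simpa [Nat.lt_succ_iff] using hk
  simp only [pe, Polynomial.coe_eval₂RingHom, Polynomial.eval₂_monomial, map_mul]
  rw [← th_hm N (M-k) _ (hb.natDegree_coeff k), map_pow]
  have : zL ^ (N * M) = zL ^ (N * (M - k)) * (zL ^ N) ^ k := by
    rw [← pow_mul, ← pow_add, ← mul_add]; congr 2; omega
  rw [this, mul_pow]
  have h1 : (zL⁻¹ ^ N) ^ k * (zL ^ N) ^ k = 1 := by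
    rw [← mul_pow, ← mul_pow, inv_mul_cancel₀ zL_ne]; simp
  linear_combination (th (zL⁻¹ ^ N) (b.coeff k)) * (io β)^k * zL ^ (N * (M-k)) * h1

theorem cc_hm (N M : ℕ) (hN : N ≠ 0) (b : BP) (β : PowerSeries ℂ) :
    PowerSeries.constantCoeff (pe (tz 0 N) β (hm M b)) = (tp M b).eval (PowerSeries.constantCoeff β) := by
  rw [cc_pe _ _ hN, pe_apply]
  congr 1
  ext k
  rw [Polynomial.coeff_map, coeff_hm, coeff_tp]
  split_ifs with h
  · rw [th_eval, ← Polynomial.coeff_zero_eq_eval_zero, Polynomial.coeff_reflect, Polynomial.revAt_le (Nat.zero_le _)]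
    simp
  · simp

theorem hm_monic (p : BP) (hp : p.Monic) : (hm p.natDegree p).Monic ∧ (hm p.natDegree p).natDegree = p.natDegree := by
  have h1 : (hm p.natDegree p).coeff p.natDegree = 1 := by
    rw [coeff_hm, if_pos le_rfl, hp.coeff_natDegree]
    simp
  have h2 : (hm p.natDegree p).natDegree ≤ p.natDegree := by
    rw [Polynomial.natDegree_le_iff_coeff_eq_zero]
    intro k hk
    rw [coeff_hm, if_neg (by omega)]
  have h3 : (hm p.natDegree p).natDegree = p.natDegree := by
    apply le_antisymm h2
    apply Polynomial.le_natDegree_of_ne_zero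
    rw [h1]; exact one_ne_zero
  refine ⟨?_, h3⟩
  rw [Polynomial.Monic, Polynomial.leadingCoeff, h3, h1]

theorem lin_aux {K : Type*} [Field K] (a b : K) (ha : a ≠ 0) (N : ℕ) :
    Polynomial.C (a ^ N) * Polynomial.X - Polynomial.C b =
      Polynomial.C (a ^ N) * (Polynomial.X - Polynomial.C (a⁻¹ ^ N * b)) := by
  rw [mul_sub, ← Polynomial.C_mul, ← mul_assoc, ← mul_pow, mul_inv_cancel₀ ha, one_pow, one_mul]

theorem inf_split (N d : ℕ) (p : BP) (hp : TD p d) (β : Fin d → PowerSeries ℂ)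
    (h : (hm d p).map (th (tz 0 N)) = ∏ i, (Polynomial.X - Polynomial.C (β i))) :
    p.map (th (zL⁻¹ ^ N)) = ∏ i, (Polynomial.X - Polynomial.C (zL⁻¹ ^ N * io (β i))) := by
  have h1 : (((hm d p).map (th (tz 0 N))).map io).comp (Polynomial.C (zL ^ N) * Polynomial.X) =
      Polynomial.C (zL ^ (N * d)) * p.map (th (zL⁻¹ ^ N)) := by
    ext1 k
    rw [Polynomial.comp_C_mul_X_coeff, Polynomial.coeff_C_mul, Polynomial.coeff_map, Polynomial.coeff_map,
      Polynomial.coeff_map, coeff_hm]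
    split_ifs with hk
    · rw [← th_hm N (d-k) _ (hp.natDegree_coeff k)]
      have : zL ^ (N * d) = zL ^ (N * (d - k)) * (zL ^ N) ^ k := by
        rw [← pow_mul, ← pow_add, ← mul_add]; congr 2; omega
      rw [this]; ring
    · have : p.coeff k = 0 := Polynomial.coeff_eq_zero_of_natDegree_lt (lt_of_le_of_lt hp.natDegree_le (not_le.mp hk))
      simp [this]
  have h2 : ∀ i, Polynomial.C (zL ^ N) * Polynomial.X - Polynomial.C (io (β i)) =
      Polynomial.C (zL ^ N) * (Polynomial.X - Polynomial.C (zL⁻¹ ^ N * io (β i))) := by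
    intro i
    exact lin_aux zL (io (β i)) zL_ne N
  rw [h, Polynomial.map_prod, Polynomial.prod_comp] at h1
  simp only [Polynomial.map_sub, Polynomial.map_X, Polynomial.map_C, Polynomial.sub_comp, Polynomial.X_comp,
    Polynomial.C_comp, h2] at h1
  rw [Finset.prod_mul_distrib, Finset.prod_const, Finset.card_univ, Fintype.card_fin, ← Polynomial.C_pow, ← pow_mul] at h1
  have hne : Polynomial.C (zL ^ (N * d)) ≠ 0 := Polynomial.C_ne_zero.mpr (pow_ne_zero _ zL_ne)
  exact (mul_left_cancel₀ hne h1).symm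

end Core

namespace Core

theorem puiseux' (p : BP) (hp : p.Monic) (d : ℕ) (hd : p.natDegree = d) (x0 : ℂ) :
    ∃ (N : ℕ) (hN : N ≠ 0) (α : Fin d → PowerSeries ℂ),
    p.map (th (tz x0 N)) = ∏ i, (Polynomial.X - Polynomial.C (α i)) := by
  subst hd
  exact puiseux p hp x0

theorem res_prod {L : Type*} [CommRing L] [IsDomain L] [Algebra ℂ L] (t : L) (p g : BP) (hp : p.Monic) (m : ℕ)
    (hg : g.natDegree ≤ m)
    (d : ℕ) (hpd : p.natDegree = d)
    (β : Fin d → L) (h : p.map (th t) = ∏ i, (Polynomial.X - Polynomial.C (β i))) :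
    th t (Polynomial.resultant p g d m) = ∏ i, pe t (β i) g := by
  subst hpd
  rw [← Polynomial.resultant_map_map]
  have hd : (∏ i, (Polynomial.X - Polynomial.C (β i))).natDegree = p.natDegree := by
    rw [← h, hp.natDegree_map]
  have hg' : (g.map (th t)).natDegree ≤ m := Polynomial.natDegree_map_le.trans hg
  have := Polynomial.resultant_prod_left (Finset.univ) (fun i => Polynomial.X - Polynomial.C (β i)) (g.map (th t)) m
    (by simp) hg'
  rw [hd] at this
  rw [h, this]
  apply Finset.prod_congr rfl
  intro i _
  rw [Polynomial.natDegree_X_sub_C, Polynomial.resultant_X_sub_C_left _ _ _ hg', pe_apply]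

theorem cc_th_reflect (N : ℕ) (hN : N ≠ 0) (f : Polynomial ℂ) :
    PowerSeries.constantCoeff (th (tz 0 N) (Polynomial.reflect f.natDegree f)) = f.leadingCoeff := by
  rw [cc_th _ _ hN, ← Polynomial.coeff_zero_eq_eval_zero, Polynomial.coeff_reflect, Polynomial.revAt_le (Nat.zero_le _)]
  simp

theorem res_deg (p g : BP) (hp : p.Monic) (htd : TD p p.natDegree) (m : ℕ) (hg : TD g m)
    (hcop : ∀ l, (tp p.natDegree p).eval l = 0 → (tp m g).eval l ≠ 0) :
    (Polynomial.resultant p g p.natDegree m).natDegree = p.natDegree * m ∧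
    Polynomial.resultant p g p.natDegree m ≠ 0 := by
  set R := Polynomial.resultant p g p.natDegree m with hR
  obtain ⟨hm1, hm2⟩ := hm_monic p hp
  obtain ⟨N, hN, β, hβ⟩ := puiseux' (hm p.natDegree p) hm1 _ hm2 0
  have hs := inf_split N p.natDegree p htd β hβ
  have hr := res_prod (zL⁻¹ ^ N) p g hp m hg.natDegree_le _ rfl _ hs
  rw [← hR] at hr
  set U := ∏ i, pe (tz 0 N) (β i) (hm m g) with hU
  have hU1 : PowerSeries.constantCoeff U ≠ 0 := by
    rw [hU, map_prod, Finset.prod_ne_zero_iff]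
    intro i _
    rw [cc_hm _ _ hN]
    apply hcop
    rw [← cc_hm N _ hN, pe_apply, hβ, Polynomial.eval_prod, Finset.prod_eq_zero (Finset.mem_univ i) (by simp), map_zero]
  have hU2 : th (zL⁻¹ ^ N) R * zL ^ (N * (p.natDegree * m)) = io U := by
    rw [hr, hU, map_prod]
    have : zL ^ (N * (p.natDegree * m)) = ∏ i : Fin p.natDegree, zL ^ (N * m) := by
      rw [Finset.prod_const, Finset.card_univ, Fintype.card_fin, ← pow_mul]; congr 1; ring
    rw [this, ← Finset.prod_mul_distrib]
    exact Finset.prod_congr rfl fun i _ => inf_eval N m g hg (β i)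
  have hR0 : R ≠ 0 := by
    intro h
    rw [h, map_zero, zero_mul] at hU2
    have : U = 0 := io_inj (hU2.symm.trans (map_zero _).symm)
    rw [this] at hU1
    simp at hU1
  refine ⟨?_, hR0⟩
  have h3 := th_hm N R.natDegree R le_rfl
  have h4 := io_zL_cmp U (th (tz 0 N) (Polynomial.reflect R.natDegree R)) (N * R.natDegree) (N * (p.natDegree * m)) hU1
    (by rw [cc_th_reflect _ hN]; exact Polynomial.leadingCoeff_ne_zero.mpr hR0)
    (by rw [← hU2, ← h3]; ring)
  exact Nat.eq_of_mul_eq_mul_left (Nat.pos_of_ne_zero hN) h4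

/-- The core hypotheses on a normalised polynomial. -/
structure Hyp (n : ℕ) (F : BP) : Prop where
  hn : 1 ≤ n
  monic : F.Monic
  deg : F.natDegree = n + 1
  td : TD F (n+1)
  sf : ∀ l, (tp (n+1) F).eval l = 0 → (Polynomial.derivative (tp (n+1) F)).eval l ≠ 0
  crit : ∀ x0 y0 : ℂ, pe x0 y0 (Dx F) = 0 → pe x0 y0 (Polynomial.derivative F) = 0 → pe x0 y0 F = 0

/-- normalised Y-derivative -/
noncomputable def pY (n : ℕ) (F : BP) : BP := Polynomial.C (Polynomial.C ((n:ℂ)+1)⁻¹) * Polynomial.derivative F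

theorem n1_ne (n : ℕ) : (n:ℂ)+1 ≠ 0 := by exact_mod_cast Nat.succ_ne_zero n

variable {n : ℕ} {F : BP}

theorem dF_eq (n : ℕ) (F : BP) : Polynomial.derivative F = Polynomial.C (Polynomial.C ((n:ℂ)+1)) * pY n F := by
  rw [pY, ← mul_assoc, ← Polynomial.C_mul, ← Polynomial.C_mul, mul_inv_cancel₀ (n1_ne n)]; simp

theorem Hyp.pY_deg (h : Hyp n F) : (pY n F).natDegree = n ∧ (pY n F).Monic := by
  have h1 : (pY n F).coeff n = 1 := by
    rw [pY, Polynomial.coeff_C_mul, Polynomial.coeff_derivative, ← h.deg, h.monic.coeff_natDegree, one_mul]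
    rw [show ((n : Polynomial ℂ) + 1) = Polynomial.C ((n:ℂ)+1) by simp, ← Polynomial.C_mul, inv_mul_cancel₀ (n1_ne n)]
    simp
  have h2 : (pY n F).natDegree ≤ n := by
    rw [Polynomial.natDegree_le_iff_coeff_eq_zero]
    intro k hk
    rw [pY, Polynomial.coeff_C_mul, Polynomial.coeff_derivative,
      Polynomial.coeff_eq_zero_of_natDegree_lt (by rw [h.deg]; omega)]
    simp
  have h3 : (pY n F).natDegree = n := le_antisymm h2 (Polynomial.le_natDegree_of_ne_zero (by rw [h1]; exact one_ne_zero))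
  exact ⟨h3, by rw [Polynomial.Monic, Polynomial.leadingCoeff, h3, h1]⟩

theorem Hyp.pY_td (h : Hyp n F) : TD (pY n F) n := by
  intro k j hkj
  rw [pY, Polynomial.coeff_C_mul, Polynomial.coeff_C_mul, Polynomial.coeff_derivative]
  rw [show ((k : Polynomial ℂ) + 1) = Polynomial.C ((k:ℂ)+1) by simp, Polynomial.coeff_mul_C, h.td _ _ (by omega)]
  simp

theorem Hyp.Dx_td (h : Hyp n F) : TD (Dx F) n := by
  intro k j hkj
  rw [coeff_Dx, Polynomial.coeff_derivative, h.td _ _ (by omega)]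
  simp

theorem tp_pY (n : ℕ) (F : BP) : tp n (pY n F) = Polynomial.C ((n:ℂ)+1)⁻¹ * Polynomial.derivative (tp (n+1) F) := by
  ext k
  rw [coeff_tp, Polynomial.coeff_C_mul, Polynomial.coeff_derivative, coeff_tp, pY]
  by_cases hk : k ≤ n
  · rw [if_pos hk, if_pos (by omega), Polynomial.coeff_C_mul, Polynomial.coeff_C_mul, Polynomial.coeff_derivative]
    rw [show ((k : Polynomial ℂ) + 1) = Polynomial.C ((k:ℂ)+1) by simp, Polynomial.coeff_mul_C]
    rw [Nat.add_sub_add_right]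
  · rw [if_neg hk, if_neg (by omega)]; simp

theorem tp_Dx (n : ℕ) (F : BP) : tp n (Dx F) = Polynomial.C ((n:ℂ)+1) * tp (n+1) F
    - Polynomial.X * Polynomial.derivative (tp (n+1) F) := by
  ext k
  rw [coeff_tp, Polynomial.coeff_sub, Polynomial.coeff_C_mul, coeff_tp, coeff_Dx]
  have : (Polynomial.X * Polynomial.derivative (tp (n+1) F)).coeff k = k * (tp (n+1) F).coeff k := by
    rcases k with _ | k
    · simp
    · rw [Polynomial.coeff_X_mul, Polynomial.coeff_derivative]; push_cast; ring
  rw [this, coeff_tp]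
  by_cases hk : k ≤ n
  · rw [if_pos hk, if_pos (by omega), Polynomial.coeff_derivative, show n + 1 - k = n - k + 1 by omega]
    rw [Nat.cast_sub hk]; ring
  · rw [if_neg hk]
    by_cases hk2 : k = n + 1
    · subst hk2; simp
    · rw [if_neg (by omega)]; simp

theorem Hyp.R1 (h : Hyp n F) : (Polynomial.resultant (pY n F) F n (n+1)).natDegree = n * (n+1) ∧
    Polynomial.resultant (pY n F) F n (n+1) ≠ 0 := by
  have := res_deg (pY n F) F h.pY_deg.2 (by rw [h.pY_deg.1]; exact h.pY_td) (n+1) h.td (by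
    intro l hl h2
    rw [h.pY_deg.1, tp_pY] at hl
    simp only [Polynomial.eval_mul, Polynomial.eval_C, mul_eq_zero, inv_eq_zero, n1_ne, false_or] at hl
    exact h.sf l h2 hl)
  rwa [h.pY_deg.1] at this

theorem Hyp.R2 (h : Hyp n F) : (Polynomial.resultant (pY n F) (Dx F) n n).natDegree = n * n ∧
    Polynomial.resultant (pY n F) (Dx F) n n ≠ 0 := by
  have := res_deg (pY n F) (Dx F) h.pY_deg.2 (by rw [h.pY_deg.1]; exact h.pY_td) n h.Dx_td (by
    intro l hl h2
    rw [h.pY_deg.1, tp_pY] at hl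
    simp only [Polynomial.eval_mul, Polynomial.eval_C, mul_eq_zero, inv_eq_zero, n1_ne, false_or] at hl
    rw [tp_Dx] at h2
    simp only [Polynomial.eval_mul, Polynomial.eval_C, Polynomial.eval_sub, hl, mul_zero, sub_zero, mul_eq_zero, n1_ne, false_or] at h2
    exact h.sf l h2 hl)
  rwa [h.pY_deg.1] at this

/-- number of distinct roots of F(x0,·) -/
noncomputable def nroots (F : BP) (x0 : ℂ) : ℕ := (F.map (th x0)).roots.toFinset.card

theorem defect_count (f : Polynomial ℂ) (hf : f ≠ 0) (d : ℕ) (hd : f.natDegree = d) (s : Multiset ℂ)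
    (hs : s = f.derivative.roots) (hd0 : f.derivative ≠ 0) :
    (s.filter (fun l => f.eval l = 0)).card + f.roots.toFinset.card = d := by
  classical
  subst hs
  have h1 : (f.derivative.roots.filter (fun l => f.eval l = 0)).card =
      ∑ l ∈ f.roots.toFinset, (f.derivative.rootMultiplicity l) := by
    rw [← Multiset.sum_count_eq_card (s := f.roots.toFinset)]
    · apply Finset.sum_congr rfl
      intro l hl
      have : f.eval l = 0 := by
        rw [Multiset.mem_toFinset, Polynomial.mem_roots hf] at hl; exact hl
      rw [Multiset.count_filter, if_pos this, Polynomial.count_roots]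
    · intro l hl
      rw [Multiset.mem_filter] at hl
      rw [Multiset.mem_toFinset, Polynomial.mem_roots hf]
      exact hl.2
  have h2 : ∑ l ∈ f.roots.toFinset, f.rootMultiplicity l = d := by
    rw [← hd, ← IsAlgClosed.card_roots_eq_natDegree, ← Multiset.sum_count_eq_card (s := f.roots.toFinset) (m := f.roots)]
    · simp
    · intro l hl; simpa using hl
  rw [h1, ← h2, Finset.card_eq_sum_ones, ← Finset.sum_add_distrib]
  apply Finset.sum_congr rfl
  intro l hl
  have hl : f.IsRoot l := by
    rw [Multiset.mem_toFinset, Polynomial.mem_roots hf] at hl; exact hl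
  rw [Polynomial.derivative_rootMultiplicity_of_root hl]
  have := (Polynomial.rootMultiplicity_pos hf).mpr hl
  omega

theorem Hyp.local_count (h : Hyp n F) (x0 : ℂ) :
    (Polynomial.resultant (pY n F) F n (n+1)).rootMultiplicity x0 + nroots F x0 =
    (Polynomial.resultant (pY n F) (Dx F) n n).rootMultiplicity x0 + (n + 1) := by
  classical
  obtain ⟨N, hN, β, hβ⟩ := puiseux' (pY n F) h.pY_deg.2 n h.pY_deg.1 x0
  have r1 := res_prod (tz x0 N) (pY n F) F h.pY_deg.2 (n+1) h.td.natDegree_le n h.pY_deg.1 β hβ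
  have r2 := res_prod (tz x0 N) (pY n F) (Dx F) h.pY_deg.2 n h.Dx_td.natDegree_le n h.pY_deg.1 β hβ
  have hFY : ∀ j, pe (tz x0 N) (β j) (Polynomial.derivative F) = 0 := by
    intro j
    rw [dF_eq n F, map_mul]
    have : pe (tz x0 N) (β j) (pY n F) = 0 := by
      rw [pe_apply, hβ, Polynomial.eval_prod, Finset.prod_eq_zero (Finset.mem_univ j) (by simp)]
    rw [this, mul_zero]
  have hNo : ((N : PowerSeries ℂ)).order = 0 := by
    rw [show (N : PowerSeries ℂ) = PowerSeries.C (N : ℂ) by simp]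
    exact PowerSeries.order_zero_of_unit (by
          rw [PowerSeries.isUnit_iff_constantCoeff, PowerSeries.constantCoeff_C]
          exact (Nat.cast_ne_zero.mpr hN).isUnit)
  have key : ∀ j, (pe (tz x0 N) (β j) F).order = (pe (tz x0 N) (β j) (Dx F)).order +
      ((if pe x0 (PowerSeries.constantCoeff (β j)) F = 0 then N else 0 : ℕ) : ℕ∞) := by
    intro j
    split_ifs with hj
    · rw [← order_dl _ (by rw [cc_pe _ _ hN]; exact hj), dl_pe, hFY, zero_mul, add_zero, PowerSeries.order_mul,
        PowerSeries.order_mul, PowerSeries.order_X_pow, hNo, zero_add]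
    · have h1 : (pe (tz x0 N) (β j) F).order = 0 := by
        by_contra hc
        rw [← ne_eq, PowerSeries.order_ne_zero_iff_constCoeff_eq_zero, cc_pe _ _ hN] at hc
        exact hj hc
      have h2 : (pe (tz x0 N) (β j) (Dx F)).order = 0 := by
        by_contra hc
        rw [← ne_eq, PowerSeries.order_ne_zero_iff_constCoeff_eq_zero, cc_pe _ _ hN] at hc
        refine hj (h.crit _ _ hc ?_)
        rw [← cc_pe _ _ hN, hFY, map_zero]
      rw [h1, h2]; simp
  have o1 := congrArg PowerSeries.order r1
  have o2 := congrArg PowerSeries.order r2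
  rw [PowerSeries.order_prod, Finset.sum_congr rfl (fun j _ => key j), Finset.sum_add_distrib, ← PowerSeries.order_prod, ← o2] at o1
  rw [order_th _ _ hN _ h.R1.2, order_th _ _ hN _ h.R2.2, ← Nat.cast_sum, ← Nat.cast_add, Nat.cast_inj] at o1
  rw [← Finset.sum_filter, Finset.sum_const, smul_eq_mul, mul_comm _ N, ← mul_add] at o1
  have o1 := Nat.eq_of_mul_eq_mul_left (Nat.pos_of_ne_zero hN) o1
  rw [o1, add_assoc]
  congr 1
  -- count
  have hfm : (F.map (th x0)).Monic := h.monic.map _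
  have hfd : (F.map (th x0)).natDegree = n + 1 := by rw [h.monic.natDegree_map, h.deg]
  have hp : (pY n F).map (th x0) = ∏ j, (Polynomial.X - Polynomial.C (PowerSeries.constantCoeff (β j))) := by
    have := congrArg (Polynomial.map (PowerSeries.constantCoeff (R := ℂ))) hβ
    rw [Polynomial.map_map, Polynomial.map_prod] at this
    simp only [Polynomial.map_sub, Polynomial.map_X, Polynomial.map_C] at this
    rw [← this]
    congr 1
    apply RingHom.ext
    intro f
    rw [RingHom.comp_apply, cc_th _ _ hN, th_eval]
  have hder : (F.map (th x0)).derivative = Polynomial.C ((n:ℂ)+1) * (pY n F).map (th x0) := by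
    rw [Polynomial.derivative_map, dF_eq n F, Polynomial.map_mul]; simp
  have hd0 : (F.map (th x0)).derivative ≠ 0 := by
    rw [hder]
    exact mul_ne_zero (Polynomial.C_ne_zero.mpr (n1_ne n)) ((h.pY_deg.2.map _).ne_zero)
  have hroots : (Finset.univ.val.map (fun j => PowerSeries.constantCoeff (β j))) = (F.map (th x0)).derivative.roots := by
    rw [hder, Polynomial.roots_C_mul _ (n1_ne n), hp]
    rw [show (∏ j, (Polynomial.X - Polynomial.C (PowerSeries.constantCoeff (β j)))) =
      ((Finset.univ.val.map (fun j => PowerSeries.constantCoeff (β j))).map (fun a => Polynomial.X - Polynomial.C a)).prod by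
        rw [Multiset.map_map]; rfl]
    rw [Polynomial.roots_multiset_prod_X_sub_C]
  have := defect_count _ hfm.ne_zero (n+1) hfd _ hroots hd0
  rw [Multiset.filter_map, Multiset.card_map] at this
  rw [nroots, ← this]
  congr 1
  rw [Finset.card_def]
  congr 1
  rw [Finset.filter_val]
  congr 1
  funext j
  simp only [Function.comp_apply, pe_apply]

theorem sum_mult (R : Polynomial ℂ) (S : Finset ℂ) (hS : R.roots.toFinset ⊆ S) :
    ∑ x ∈ S, R.rootMultiplicity x = R.natDegree := by
  classical
  rw [← IsAlgClosed.card_roots_eq_natDegree, ← Multiset.sum_count_eq_card (s := S) (m := R.roots)]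
  · simp
  · intro l hl; exact hS (by simpa using hl)

theorem Hyp.defect (h : Hyp n F) (S : Finset ℂ) :
    (n + 1) * S.card ≤ n + ∑ x ∈ S, nroots F x := by
  classical
  set R1 := Polynomial.resultant (pY n F) F n (n+1)
  set R2 := Polynomial.resultant (pY n F) (Dx F) n n
  set S' := S ∪ (R1.roots.toFinset ∪ R2.roots.toFinset) with hS'
  have e1 := sum_mult R1 S' (by intro x hx; simp only [hS', Finset.mem_union]; tauto)
  have e2 := sum_mult R2 S' (by intro x hx; simp only [hS', Finset.mem_union]; tauto)
  rw [h.R1.1] at e1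
  rw [h.R2.1] at e2
  have hle : ∀ x, nroots F x ≤ n + 1 := by
    intro x
    refine (Multiset.toFinset_card_le _).trans ((Polynomial.card_roots' _).trans ?_)
    rw [h.monic.natDegree_map, h.deg]
  have e3 : ∑ x ∈ S', (R1.rootMultiplicity x + nroots F x) = ∑ x ∈ S', (R2.rootMultiplicity x + (n+1)) :=
    Finset.sum_congr rfl fun x _ => h.local_count x
  rw [Finset.sum_add_distrib, Finset.sum_add_distrib, e1, e2] at e3
  have e4 : ∑ x ∈ S', (n + 1 - nroots F x) + ∑ x ∈ S', nroots F x = ∑ x ∈ S', (n+1) := by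
    rw [← Finset.sum_add_distrib]
    exact Finset.sum_congr rfl fun x _ => Nat.sub_add_cancel (hle x)
  have e5 : ∑ x ∈ S, (n + 1 - nroots F x) + ∑ x ∈ S, nroots F x = ∑ x ∈ S, (n+1) := by
    rw [← Finset.sum_add_distrib]
    exact Finset.sum_congr rfl fun x _ => Nat.sub_add_cancel (hle x)
  have e6 : ∑ x ∈ S, (n + 1 - nroots F x) ≤ ∑ x ∈ S', (n + 1 - nroots F x) :=
    Finset.sum_le_sum_of_subset Finset.subset_union_left
  rw [Finset.sum_const, smul_eq_mul, mul_comm] at e5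
  nlinarith

end Core

namespace Core
variable {n : ℕ} {F : BP}

theorem eq_prod_of_roots {R : Type*} [CommRing R] [IsDomain R] (f : Polynomial R) (hf : f.Monic) (m : ℕ)
    (hd : f.natDegree = m) (w : Fin m → R) (hw : Function.Injective w) (h : ∀ i, f.eval (w i) = 0) :
    f = ∏ i, (Polynomial.X - Polynomial.C (w i)) := by
  have hm : (∏ i, (Polynomial.X - Polynomial.C (w i))).Monic := Polynomial.monic_prod_X_sub_C _ _
  have hdm : (∏ i, (Polynomial.X - Polynomial.C (w i))).natDegree = m := by
    rw [Polynomial.natDegree_prod_of_monic _ _ (fun i _ => Polynomial.monic_X_sub_C _)]; simp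
  refine Polynomial.eq_of_degree_sub_lt_of_eval_index_eq (v := w) Finset.univ hw.injOn ?_ ?_
  · have : (f - ∏ i, (Polynomial.X - Polynomial.C (w i))).degree < f.degree := by
      apply Polynomial.degree_sub_lt
      · rw [Polynomial.degree_eq_natDegree hf.ne_zero, Polynomial.degree_eq_natDegree hm.ne_zero, hd, hdm]
      · exact hf.ne_zero
      · rw [hf.leadingCoeff, hm.leadingCoeff]
    rw [Polynomial.degree_eq_natDegree hf.ne_zero, hd] at this
    simpa using this
  · intro i _
    rw [h, Polynomial.eval_prod, Finset.prod_eq_zero (Finset.mem_univ i) (by simp)]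

theorem hm_map_cc (N M : ℕ) (hN : N ≠ 0) (b : BP) :
    ((hm M b).map (th (tz 0 N))).map PowerSeries.constantCoeff = tp M b := by
  ext k
  rw [Polynomial.coeff_map, Polynomial.coeff_map, cc_th _ _ hN, coeff_hm, coeff_tp]
  split_ifs with hk
  · rw [← Polynomial.coeff_zero_eq_eval_zero, Polynomial.coeff_reflect, Polynomial.revAt_le (Nat.zero_le _)]; simp
  · simp

theorem Hyp.hm_monic (h : Hyp n F) : (hm (n+1) F).Monic ∧ (hm (n+1) F).natDegree = n + 1 := by
  have := Core.hm_monic F h.monic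
  rwa [h.deg] at this

theorem Hyp.tp_monic (h : Hyp n F) : (tp (n+1) F).Monic ∧ (tp (n+1) F).natDegree = n + 1 := by
  rw [← hm_map_cc 1 _ one_ne_zero]
  have h1 : ((hm (n+1) F).map (th (tz 0 1))).Monic := h.hm_monic.1.map _
  refine ⟨h1.map _, ?_⟩
  rw [h1.natDegree_map, h.hm_monic.1.natDegree_map, h.hm_monic.2]

/-- the data of the branches at infinity -/
def InfData (n : ℕ) (F : BP) (w : Fin (n+1) → PowerSeries ℂ) : Prop :=
  Function.Injective (fun i => PowerSeries.constantCoeff (w i)) ∧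
  F.map (th zL⁻¹) = ∏ i, (Polynomial.X - Polynomial.C (zL⁻¹ * io (w i)))

theorem Hyp.inf (h : Hyp n F) : ∃ w, InfData n F w := by
  classical
  obtain ⟨hφ, hφd⟩ := h.tp_monic
  have hnd : (tp (n+1) F).roots.Nodup := by
    rw [Multiset.nodup_iff_count_le_one]
    intro a
    rw [Polynomial.count_roots]
    by_contra hc
    push Not at hc
    rw [Polynomial.one_lt_rootMultiplicity_iff_isRoot hφ.ne_zero] at hc
    exact h.sf a hc.1 hc.2
  have hcard : (tp (n+1) F).roots.toFinset.card = n + 1 := by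
    rw [Multiset.toFinset_card_of_nodup hnd, IsAlgClosed.card_roots_eq_natDegree, hφd]
  let e := (Finset.equivFinOfCardEq hcard).symm
  have hroot : ∀ i, (tp (n+1) F).eval (e i : ℂ) = 0 := by
    intro i
    have := (e i).2
    rw [Multiset.mem_toFinset, Polynomial.mem_roots hφ.ne_zero] at this
    exact this
  have hens : ∀ i, ∃ α : PowerSeries ℂ, ((hm (n+1) F).map (th (tz 0 1))).eval α = 0 ∧ PowerSeries.constantCoeff α = (e i : ℂ) := by
    intro i
    apply hensel
    · rw [hm_map_cc _ _ one_ne_zero]; exact hroot i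
    · rw [hm_map_cc _ _ one_ne_zero]; exact h.sf _ (hroot i)
  choose w hw1 hw2 using hens
  have hinj : Function.Injective (fun i => PowerSeries.constantCoeff (w i)) := by
    intro i j hij
    simp only [hw2] at hij
    exact e.injective (Subtype.ext hij)
  refine ⟨w, hinj, ?_⟩
  have h1 : ((hm (n+1) F).map (th (tz 0 1))).Monic := h.hm_monic.1.map _
  have := eq_prod_of_roots _ h1 (n+1) (by rw [h.hm_monic.1.natDegree_map, h.hm_monic.2]) w
    (fun i j hij => hinj (congrArg PowerSeries.constantCoeff hij)) hw1
  have := inf_split 1 (n+1) F h.td w this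
  simpa only [pow_one] using this

section
variable {w : Fin (n+1) → PowerSeries ℂ}

theorem th_inf_inj (f : Polynomial ℂ) (hf : th zL⁻¹ f = 0) : f = 0 := by
  have h1 := th_hm 1 f.natDegree f le_rfl
  rw [pow_one, hf, zero_mul] at h1
  have h2 : th (tz 0 1) (Polynomial.reflect f.natDegree f) = 0 := io_inj (h1.symm.trans (map_zero _).symm)
  have := th_inj 0 1 one_ne_zero _ h2
  rwa [Polynomial.reflect_eq_zero_iff] at this

theorem map_inf_inj (b : BP) (hb : b.map (th zL⁻¹) = 0) : b = 0 := by
  ext1 k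
  have := congrArg (fun p => Polynomial.coeff p k) hb
  simp only [Polynomial.coeff_map, Polynomial.coeff_zero] at this
  rw [th_inf_inj _ this, Polynomial.coeff_zero]

theorem InfData.yinj (hw : InfData n F w) : Function.Injective (fun i => zL⁻¹ * io (w i)) := by
  intro i j hij
  apply hw.1
  exact congrArg PowerSeries.constantCoeff (io_inj (mul_left_cancel₀ (inv_ne_zero zL_ne) hij))

theorem InfData.root (hw : InfData n F w) (i) : pe zL⁻¹ (zL⁻¹ * io (w i)) F = 0 := by
  rw [pe_apply, hw.2, Polynomial.eval_prod, Finset.prod_eq_zero (Finset.mem_univ i) (by simp)]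

theorem InfData.zero (hw : InfData n F w) (b : BP) (hb : b.natDegree ≤ n)
    (h : ∀ i, pe zL⁻¹ (zL⁻¹ * io (w i)) b = 0) : b = 0 := by
  apply map_inf_inj
  refine Polynomial.eq_zero_of_degree_lt_of_eval_index_eq_zero (v := fun i => zL⁻¹ * io (w i)) Finset.univ hw.yinj.injOn ?_ ?_
  · refine (Polynomial.degree_le_natDegree).trans_lt ?_
    have : (b.map (th zL⁻¹)).natDegree ≤ n := Polynomial.natDegree_map_le.trans hb
    simp only [Finset.card_univ, Fintype.card_fin]
    exact_mod_cast Nat.lt_succ_of_le this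
  · intro i _
    rw [← pe_apply]; exact h i

theorem exists_TD (b : BP) : ∃ M, TD b M := by
  refine ⟨b.natDegree + ∑ k ∈ Finset.range (b.natDegree + 1), (b.coeff k).natDegree, ?_⟩
  intro k j hkj
  by_cases hk : b.natDegree < k
  · rw [Polynomial.coeff_eq_zero_of_natDegree_lt hk]; simp
  · apply Polynomial.coeff_eq_zero_of_natDegree_lt
    have := Finset.single_le_sum (f := fun k => (b.coeff k).natDegree) (fun _ _ => Nat.zero_le _)
      (Finset.mem_range.mpr (show k < b.natDegree + 1 by omega))
    omega

theorem TD.mono {b : BP} {M M' : ℕ} (h : TD b M) (hM : M ≤ M') : TD b M' :=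
  fun k j hkj => h k j (by omega)

theorem InfData.td (hw : InfData n F w) (b : BP) (hb : b.natDegree ≤ n) (M : ℕ)
    (h : ∀ i, ∃ u, pe zL⁻¹ (zL⁻¹ * io (w i)) b * zL ^ M = io u) : TD b M := by
  have step : ∀ M', M ≤ M' → TD b (M'+1) → TD b M' := by
    intro M' hM' ht
    have h0 : tp (M'+1) b = 0 := by
      refine Polynomial.eq_zero_of_degree_lt_of_eval_index_eq_zero (v := fun i => PowerSeries.constantCoeff (w i))
        Finset.univ hw.1.injOn ?_ ?_
      · refine (Polynomial.degree_lt_iff_coeff_zero _ _).mpr ?_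
        intro k hk
        rw [coeff_tp, Polynomial.coeff_eq_zero_of_natDegree_lt (p := b) (by simp at hk; omega)]
        simp
      · intro i _
        rw [← cc_hm 1 _ one_ne_zero]
        obtain ⟨u, hu⟩ := h i
        have h1 := inf_eval 1 (M'+1) b ht (w i)
        rw [pow_one, one_mul, show M' + 1 = M + (M' - M) + 1 by omega, pow_succ, pow_add, ← mul_assoc, ← mul_assoc, hu] at h1
        have h2 : io (u * PowerSeries.X ^ (M'-M) * PowerSeries.X) = io ((pe (tz 0 1) (w i)) (hm (M + (M' - M) + 1) b)) := by rw [map_mul, map_mul, map_pow]; exact h1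
        rw [show M' + 1 = M + (M' - M) + 1 by omega, ← io_inj h2]
        simp
    intro k j hkj
    by_cases hk : M' + 1 < k + j
    · exact ht k j hk
    · have := congrArg (fun p => Polynomial.coeff p k) h0
      simp only [coeff_tp, Polynomial.coeff_zero] at this
      rw [if_pos (by omega), show M' + 1 - k = j by omega] at this
      exact this
  obtain ⟨M1, hM1⟩ := exists_TD b
  have : ∀ d, TD b (M + d) → TD b M := by
    intro d
    induction d with
    | zero => exact id
    | succ d ih => intro h; exact ih (step _ (by omega) h)
  exact this M1 (hM1.mono (by omega))
end
end Core

namespace Core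
variable {n : ℕ} {F : BP}

theorem smul_eq (c : ℂ) (b : BP) : c • b = Polynomial.C (Polynomial.C c) * b := by
  ext1 k
  rw [Polynomial.coeff_smul, Polynomial.coeff_C_mul, Polynomial.smul_eq_C_mul]

/-- auxiliary data: a Bezout relation and Puiseux expansions -/
structure Dat (n : ℕ) (F : BP) where
  U : BP
  V : BP
  D : Polynomial ℂ
  bez : U * Polynomial.derivative F + V * F = Polynomial.C D
  D0 : D ≠ 0
  Dpos : 0 < D.natDegree
  N : ℂ → ℕ
  hN : ∀ x, N x ≠ 0
  α : ℂ → Fin (n+1) → PowerSeries ℂ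
  hα : ∀ x, F.map (th (tz x (N x))) = ∏ i, (Polynomial.X - Polynomial.C (α x i))

theorem Hyp.dat (h : Hyp n F) : Nonempty (Dat n F) := by
  obtain ⟨p, q, hp, hq, hpq⟩ := Polynomial.exists_mul_add_mul_eq_C_resultant (pY n F) F (m := n) (n := n+1)
    h.pY_deg.1.le h.deg.le (Or.inr (by omega))
  have hx := fun x => puiseux' F h.monic (n+1) h.deg x
  choose N hN α hα using hx
  exact ⟨{ U := Polynomial.C (Polynomial.C ((n:ℂ)+1)⁻¹) * p
           V := q
           D := Polynomial.resultant (pY n F) F n (n+1)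
           bez := by rw [← hpq, pY]; ring
           D0 := h.R1.2
           Dpos := by rw [h.R1.1]; exact Nat.mul_pos h.hn (by omega)
           N := N, hN := hN, α := α, hα := hα }⟩

namespace Dat
variable (d : Dat n F)

/-- evaluation along a branch -/
noncomputable def ev (x : ℂ) (i : Fin (n+1)) : BP →+* PowerSeries ℂ := pe (tz x (d.N x)) (d.α x i)
/-- value of D along a branch -/
noncomputable def eD (x : ℂ) : PowerSeries ℂ := th (tz x (d.N x)) d.D
/-- constant term of a branch -/
noncomputable def c0 (x : ℂ) (i : Fin (n+1)) : ℂ := PowerSeries.constantCoeff (d.α x i)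
/-- roots of D -/
noncomputable def S : Finset ℂ := d.D.roots.toFinset
/-- radical of D -/
noncomputable def r : Polynomial ℂ := ∏ x ∈ d.S, (Polynomial.X - Polynomial.C x)

theorem eD_ne (x : ℂ) : d.eD x ≠ 0 := fun h => d.D0 (th_inj _ _ (d.hN x) _ h)
theorem ev_C (x : ℂ) (i) (f : Polynomial ℂ) : d.ev x i (Polynomial.C f) = th (tz x (d.N x)) f := pe_C _ _ _
theorem ev_CD (x : ℂ) (i) : d.ev x i (Polynomial.C d.D) = d.eD x := pe_C _ _ _
theorem ev_F (x : ℂ) (i) : d.ev x i F = 0 := by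
  rw [ev, pe_apply, d.hα, Polynomial.eval_prod, Finset.prod_eq_zero (Finset.mem_univ i) (by simp)]
theorem ev_bez (x : ℂ) (i) : d.ev x i d.U * d.ev x i (Polynomial.derivative F) = d.eD x := by
  rw [← d.ev_CD x i, ← d.bez, map_add, map_mul, map_mul, d.ev_F]; ring
theorem ev_smul (x : ℂ) (i) (c : ℂ) (b : BP) : d.ev x i (c • b) = PowerSeries.C c * d.ev x i b := by
  rw [smul_eq, map_mul, ev_C, th_C]; rfl
theorem mem_S (x : ℂ) : x ∈ d.S ↔ d.D.eval x = 0 := by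
  rw [S, Multiset.mem_toFinset, Polynomial.mem_roots d.D0]; rfl
theorem S_pos : 0 < d.S.card := by
  rw [Finset.card_pos]
  obtain ⟨x, hx⟩ := IsAlgClosed.exists_root d.D (by
    rw [Polynomial.degree_eq_natDegree d.D0]; exact_mod_cast d.Dpos.ne')
  exact ⟨x, (d.mem_S x).mpr hx⟩

theorem ev_FY (x : ℂ) (i) : d.ev x i (Polynomial.derivative F) = ∏ j ∈ Finset.univ.erase i, (d.α x i - d.α x j) := by
  rw [ev, pe_apply, ← Polynomial.derivative_map, d.hα, Polynomial.derivative_prod_finset, Polynomial.eval_finset_sum,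
    Finset.sum_eq_single i]
  · rw [Polynomial.eval_mul, Polynomial.eval_prod]; simp
  · intro j _ hj
    rw [Polynomial.eval_mul, Polynomial.eval_prod,
      Finset.prod_eq_zero (Finset.mem_erase.mpr ⟨hj.symm, Finset.mem_univ i⟩) (by simp), zero_mul]
  · simp

theorem α_inj (x : ℂ) : Function.Injective (d.α x) := by
  intro i j hij
  by_contra hne
  have h1 := d.ev_bez x i
  rw [ev_FY, Finset.prod_eq_zero (Finset.mem_erase.mpr ⟨Ne.symm hne, Finset.mem_univ j⟩) (by rw [hij, sub_self]), mul_zero] at h1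
  exact d.eD_ne x h1.symm

theorem mem_S_of (x : ℂ) (i j) (hij : i ≠ j) (h : d.c0 x i = d.c0 x j) : x ∈ d.S := by
  rw [mem_S]
  have h1 := congrArg PowerSeries.constantCoeff (d.ev_bez x i)
  rw [eD, cc_th _ _ (d.hN x)] at h1
  rw [← h1, map_mul, ev_FY, map_prod, Finset.prod_eq_zero (Finset.mem_erase.mpr ⟨hij.symm, Finset.mem_univ j⟩), mul_zero]
  rw [map_sub, sub_eq_zero]; exact h

theorem lagrange (x : ℂ) (g : BP) (hg : g.natDegree ≤ n) :
    Polynomial.C (d.eD x) * g.map (th (tz x (d.N x))) =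
      ∑ i, Polynomial.C (d.ev x i g * d.ev x i d.U) * ∏ j ∈ Finset.univ.erase i, (Polynomial.X - Polynomial.C (d.α x j)) := by
  refine Polynomial.eq_of_degrees_lt_of_eval_index_eq (v := d.α x) Finset.univ (d.α_inj x).injOn ?_ ?_ ?_
  · refine (Polynomial.degree_le_natDegree).trans_lt ?_
    have : (Polynomial.C (d.eD x) * g.map (th (tz x (d.N x)))).natDegree ≤ n :=
      (Polynomial.natDegree_C_mul_le _ _).trans (Polynomial.natDegree_map_le.trans hg)
    simp only [Finset.card_univ, Fintype.card_fin]
    exact_mod_cast Nat.lt_succ_of_le this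
  · refine (Polynomial.degree_le_natDegree).trans_lt ?_
    have : (∑ i, Polynomial.C (d.ev x i g * d.ev x i d.U) * ∏ j ∈ Finset.univ.erase i, (Polynomial.X - Polynomial.C (d.α x j))).natDegree ≤ n := by
      apply Polynomial.natDegree_sum_le_of_forall_le
      intro i _
      refine (Polynomial.natDegree_C_mul_le _ _).trans ?_
      rw [Polynomial.natDegree_prod_of_monic _ _ (fun i _ => Polynomial.monic_X_sub_C _)]
      simp
    simp only [Finset.card_univ, Fintype.card_fin]
    exact_mod_cast Nat.lt_succ_of_le this
  · intro i _
    rw [Polynomial.eval_mul, Polynomial.eval_C, Polynomial.eval_finset_sum, Finset.sum_eq_single i, Polynomial.eval_mul, Polynomial.eval_C, Polynomial.eval_prod]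
    · have := d.ev_FY x i
      simp only [Polynomial.eval_sub, Polynomial.eval_X, Polynomial.eval_C]
      rw [← this, ← d.ev_bez x i, ← pe_apply]
      show _ * d.ev x i g = _
      ring
    · intro j _ hj
      rw [Polynomial.eval_mul, Polynomial.eval_prod,
        Finset.prod_eq_zero (Finset.mem_erase.mpr ⟨hj.symm, Finset.mem_univ i⟩) (by simp), mul_zero]
    · simp

/-- divisibility from local divisibility -/
theorem dvd_of_local (f : Polynomial ℂ) (h : ∀ x ∈ d.S, d.eD x ∣ th (tz x (d.N x)) f) : d.D ∣ f := by
  classical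
  by_cases hf : f = 0
  · rw [hf]; exact dvd_zero _
  rw [(IsAlgClosed.splits d.D).dvd_iff_roots_le_roots d.D0 hf]
  rw [Multiset.le_iff_count]
  intro x
  rw [Polynomial.count_roots, Polynomial.count_roots]
  by_cases hx : x ∈ d.S
  · obtain ⟨u, hu⟩ := h x hx
    have h1 := congrArg PowerSeries.order hu
    rw [PowerSeries.order_mul, order_th _ _ (d.hN x) _ hf, eD, order_th _ _ (d.hN x) _ d.D0] at h1
    have h2 : ((d.N x * d.D.rootMultiplicity x : ℕ) : ℕ∞) ≤ ((d.N x * f.rootMultiplicity x : ℕ) : ℕ∞) := by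
      rw [h1]; exact le_self_add
    rw [Nat.cast_le] at h2
    exact Nat.le_of_mul_le_mul_left h2 (Nat.pos_of_ne_zero (d.hN x))
  · rw [mem_S] at hx
    rw [Polynomial.rootMultiplicity_eq_zero hx]; exact Nat.zero_le _

theorem dvd_coeff (g : BP) (hg : g.natDegree ≤ n) (h : ∀ x ∈ d.S, ∀ i, d.eD x ^ 2 ∣ d.ev x i g) :
    ∃ g' : BP, g = Polynomial.C d.D * g' ∧ g'.natDegree ≤ n := by
  have h1 : ∀ k, d.D ∣ g.coeff k := by
    intro k
    apply d.dvd_of_local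
    intro x hx
    have := congrArg (fun p => Polynomial.coeff p k) (d.lagrange x g hg)
    simp only [Polynomial.coeff_C_mul, Polynomial.coeff_map, Polynomial.finset_sum_coeff] at this
    have h2 : d.eD x * d.eD x ∣ d.eD x * th (tz x (d.N x)) (g.coeff k) := by
      rw [this]
      apply Finset.dvd_sum
      intro i _
      rw [← pow_two]
      exact ((h x hx i).mul_right _).mul_right _
    exact (mul_dvd_mul_iff_left (d.eD_ne x)).mp h2
  obtain ⟨g', hg'⟩ := (Polynomial.C_dvd_iff_dvd_coeff d.D g).mpr h1
  refine ⟨g', hg', ?_⟩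
  rw [Polynomial.natDegree_le_iff_coeff_eq_zero] at hg ⊢
  intro k hk
  have := hg k hk
  rw [hg', Polynomial.coeff_C_mul] at this
  exact (mul_eq_zero.mp this).resolve_left d.D0

/-- the derivation operator b ↦ D² times the derivative of b/D -/
noncomputable def T (b : BP) : BP :=
  (d.U * (Dx b * Polynomial.derivative F - Polynomial.derivative b * Dx F) - b * Polynomial.C (Polynomial.derivative d.D)) %ₘ F

theorem T_pe {L : Type*} [CommRing L] [Algebra ℂ L] (δ : Derivation ℂ L L) (t y : L) (hF : pe t y F = 0) (b : BP) :
    pe t y (d.T b) * δ t = th t d.D * δ (pe t y b) - pe t y b * δ (th t d.D) := by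
  have h1 : ∀ p : BP, pe t y (p %ₘ F) = pe t y p := by
    intro p
    conv_rhs => rw [← Polynomial.modByMonic_add_div p F, map_add, map_mul, hF, zero_mul, add_zero]
  have hD : pe t y d.U * pe t y (Polynomial.derivative F) = th t d.D := by
    rw [← pe_C t y d.D, ← d.bez, map_add, map_mul, map_mul, hF]; ring
  have hd : δ (th t d.D) = th t (Polynomial.derivative d.D) * δ t := by
    rw [← pe_C t y d.D, der_pe, Dx_C, pe_C, Polynomial.derivative_C, map_zero]; ring
  have h0 := der_pe δ t y F
  rw [hF, map_zero] at h0
  have hb := der_pe δ t y b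
  rw [T, h1, hd, hb, ← hD]
  simp only [map_sub, map_mul, pe_C]
  linear_combination ((pe t y d.U) * pe t y (Polynomial.derivative b)) * h0

theorem T_add (a b : BP) : d.T (a + b) = d.T a + d.T b := by
  rw [T, T, T, ← Polynomial.add_modByMonic, Dx_add, Polynomial.derivative_add]; congr 1; ring

theorem T_smul (c : ℂ) (b : BP) : d.T (c • b) = c • d.T b := by
  rw [T, T, smul_eq, smul_eq, Dx_Cmul, Polynomial.derivative_C_mul]
  rw [show ∀ p : BP, Polynomial.C (Polynomial.C c) * (p %ₘ F) = (Polynomial.C (Polynomial.C c) * p) %ₘ F by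
    intro p; rw [Polynomial.C_mul', Polynomial.C_mul', Polynomial.smul_modByMonic]]
  congr 1; ring

theorem T_deg (h : Hyp n F) (b : BP) : (d.T b).natDegree ≤ n := by
  have h1 : F ≠ 1 := by
    intro h1
    have := h.deg
    rw [h1] at this; simp at this
  have := Polynomial.natDegree_modByMonic_lt (d.U * (Dx b * Polynomial.derivative F - Polynomial.derivative b * Dx F) - b * Polynomial.C (Polynomial.derivative d.D)) h.monic h1
  rw [h.deg] at this
  rw [T]; omega

end Dat
end Core

namespace Core
variable {n : ℕ} {F : BP}

/-- pole order at most M -/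
def OI (x : LS) (M : ℤ) : Prop := ∃ u, x * zL ^ M = io u

theorem OI.mul {x y : LS} {M M' : ℤ} (hx : OI x M) (hy : OI y M') : OI (x * y) (M + M') := by
  obtain ⟨u, hu⟩ := hx
  obtain ⟨v, hv⟩ := hy
  refine ⟨u * v, ?_⟩
  rw [zpow_add₀ zL_ne, map_mul, ← hu, ← hv]; ring

theorem OI.sub {x y : LS} {M : ℤ} (hx : OI x M) (hy : OI y M) : OI (x - y) M := by
  obtain ⟨u, hu⟩ := hx
  obtain ⟨v, hv⟩ := hy
  refine ⟨u - v, ?_⟩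
  rw [map_sub, ← hu, ← hv]; ring

theorem OI.neg {x : LS} {M : ℤ} (hx : OI x M) : OI (-x) M := by
  obtain ⟨u, hu⟩ := hx
  refine ⟨-u, ?_⟩
  rw [map_neg, ← hu]; ring

theorem dL_zpow (M : ℤ) : dL (zL ^ M) = (algebraMap ℂ LS M) * zL ^ M := by
  have h1 : ∀ m : ℕ, dL (zL ^ m) = (algebraMap ℂ LS m) * zL ^ m := by
    intro m
    rw [Derivation.leibniz_pow, dL_zL]
    rcases m with _ | m
    · simp
    · simp only [Nat.add_sub_cancel, smul_eq_mul, nsmul_eq_mul, map_natCast]; ring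
  rcases M with m | m
  · have := h1 m
    simpa using this
  · have h2 := h1 (m+1)
    have h3 : dL (zL ^ (m+1) * (zL ^ (m+1))⁻¹) = 0 := by rw [mul_inv_cancel₀ (pow_ne_zero _ zL_ne)]; simp
    rw [Derivation.leibniz, h2] at h3
    simp only [smul_eq_mul] at h3
    rw [zpow_negSucc]
    have h4 := mul_inv_cancel₀ (pow_ne_zero (m+1) zL_ne)
    have h5 : zL ^ (m+1) * (dL (zL ^ (m+1))⁻¹ + (algebraMap ℂ LS ((m+1 : ℕ):ℂ)) * (zL ^ (m+1))⁻¹) = 0 := by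
      linear_combination h3
    have h6 := (mul_eq_zero.mp h5).resolve_left (pow_ne_zero _ zL_ne)
    rw [eq_neg_of_add_eq_zero_left h6, Int.cast_negSucc, map_neg]; ring

theorem OI.dL {x : LS} {M : ℤ} (hx : OI x M) : OI (dL x) M := by
  obtain ⟨u, hu⟩ := hx
  have h1 := congrArg Core.dL hu
  rw [Derivation.leibniz, dL_io, dL_zpow] at h1
  simp only [smul_eq_mul] at h1
  refine ⟨dl u - PowerSeries.C (M:ℂ) * u, ?_⟩
  rw [map_sub, map_mul, io_C, ← h1, ← hu]; ring

theorem OI_zL : OI zL (-1) := ⟨1, by rw [zpow_neg_one, mul_inv_cancel₀ zL_ne, map_one]⟩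

theorem OI_of_TD (b : BP) (M : ℕ) (hb : TD b M) (β : PowerSeries ℂ) : OI (pe zL⁻¹ (zL⁻¹ * io β) b) M := by
  have := inf_eval 1 M b hb β
  rw [pow_one, one_mul] at this
  exact ⟨_, by rw [zpow_natCast, this]⟩

theorem OI_th (f : Polynomial ℂ) : OI (th zL⁻¹ f) f.natDegree := by
  have := th_hm 1 f.natDegree f le_rfl
  rw [pow_one, one_mul] at this
  exact ⟨_, by rw [zpow_natCast, this]⟩

theorem TD_Cmul (f : Polynomial ℂ) (b : BP) (M : ℕ) (hb : TD b M) : TD (Polynomial.C f * b) (M + f.natDegree) := by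
  intro k j hkj
  rw [Polynomial.coeff_C_mul]
  by_cases hk : M < k
  · have : b.coeff k = 0 := Polynomial.coeff_eq_zero_of_natDegree_lt (hb.natDegree_le.trans_lt hk)
    rw [this]; simp
  · apply Polynomial.coeff_eq_zero_of_natDegree_lt
    have := hb.natDegree_coeff k
    have := Polynomial.natDegree_mul_le (p := f) (q := b.coeff k)
    omega

theorem TD_of_Cmul (f : Polynomial ℂ) (hf : f ≠ 0) (b : BP) (M : ℕ) (hb : TD (Polynomial.C f * b) (M + f.natDegree)) : TD b M := by
  intro k j hkj
  by_cases h0 : b.coeff k = 0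
  · rw [h0]; simp
  · by_contra hc
    have h1 := Polynomial.le_natDegree_of_ne_zero hc
    have h2 := hb k (f.natDegree + (b.coeff k).natDegree) (by omega)
    rw [Polynomial.coeff_C_mul, Polynomial.coeff_mul_degree_add_degree] at h2
    exact mul_ne_zero (Polynomial.leadingCoeff_ne_zero.mpr hf) (Polynomial.leadingCoeff_ne_zero.mpr h0) h2

/-- polynomials of bounded degree -/
def TDs (n M : ℕ) : Submodule ℂ BP where
  carrier := {b | b.natDegree ≤ n ∧ TD b M}
  add_mem' := by
    rintro a b ⟨ha, ha'⟩ ⟨hb, hb'⟩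
    refine ⟨(Polynomial.natDegree_add_le _ _).trans (max_le ha hb), ?_⟩
    intro k j hkj
    rw [Polynomial.coeff_add, Polynomial.coeff_add, ha' k j hkj, hb' k j hkj, add_zero]
  zero_mem' := ⟨by simp, fun k j _ => by simp⟩
  smul_mem' := by
    rintro c b ⟨hb, hb'⟩
    refine ⟨(Polynomial.natDegree_smul_le _ _).trans hb, ?_⟩
    intro k j hkj
    rw [Polynomial.coeff_smul, Polynomial.coeff_smul, hb' k j hkj, smul_zero]

instance TDs_fin (n M : ℕ) : FiniteDimensional ℂ (TDs n M) := by
  let f : BP →ₗ[ℂ] (Fin (n+1) → Fin (M+1) → ℂ) :=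
    { toFun := fun b k j => (b.coeff k).coeff j
      map_add' := by intro a b; ext k j; simp
      map_smul' := by intro a b; ext k j; simp }
  refine FiniteDimensional.of_injective (f.domRestrict (TDs n M)) ?_
  refine (injective_iff_map_eq_zero _).mpr ?_
  rintro ⟨b, hb1, hb2⟩ hb
  apply Subtype.ext
  ext k j
  by_cases hk : n < k
  · rw [Polynomial.coeff_eq_zero_of_natDegree_lt (hb1.trans_lt hk)]; simp
  · by_cases hj : M < j
    · exact hb2 k j (by omega)
    · have := congrFun (congrFun hb ⟨k, by omega⟩) ⟨j, by omega⟩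
      exact this

namespace Dat
variable (d : Dat n F)

/-- functions b with b/D continuous on the curve -/
def La : Submodule ℂ BP where
  carrier := {b | ∀ x ∈ d.S, ∃ q : Fin (n+1) → PowerSeries ℂ, (∀ i, d.ev x i b = d.eD x * q i) ∧
    ∀ i j, d.c0 x i = d.c0 x j → PowerSeries.constantCoeff (q i) = PowerSeries.constantCoeff (q j)}
  add_mem' := by
    intro a b ha hb x hx
    obtain ⟨q, hq, hq'⟩ := ha x hx
    obtain ⟨p, hp, hp'⟩ := hb x hx
    refine ⟨fun i => q i + p i, fun i => by rw [map_add, hq, hp]; ring, fun i j hij => ?_⟩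
    rw [map_add, map_add, hq' i j hij, hp' i j hij]
  zero_mem' := fun x hx => ⟨fun _ => 0, fun i => by simp, fun i j _ => rfl⟩
  smul_mem' := by
    intro c b hb x hx
    obtain ⟨p, hp, hp'⟩ := hb x hx
    refine ⟨fun i => PowerSeries.C c * p i, fun i => by rw [ev_smul, hp]; ring, fun i j hij => ?_⟩
    rw [map_mul, map_mul, hp' i j hij]

/-- functions b with b/D continuous and zero over S -/
def La0 : Submodule ℂ BP where
  carrier := {b | ∀ x ∈ d.S, ∃ q : Fin (n+1) → PowerSeries ℂ, (∀ i, d.ev x i b = d.eD x * q i) ∧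
    ∀ i, PowerSeries.constantCoeff (q i) = 0}
  add_mem' := by
    intro a b ha hb x hx
    obtain ⟨q, hq, hq'⟩ := ha x hx
    obtain ⟨p, hp, hp'⟩ := hb x hx
    refine ⟨fun i => q i + p i, fun i => by rw [map_add, hq, hp]; ring, fun i => ?_⟩
    rw [map_add, hq' i, hp' i, add_zero]
  zero_mem' := fun x hx => ⟨fun _ => 0, fun i => by simp, fun i => by simp⟩
  smul_mem' := by
    intro c b hb x hx
    obtain ⟨p, hp, hp'⟩ := hb x hx
    refine ⟨fun i => PowerSeries.C c * p i, fun i => by rw [ev_smul, hp]; ring, fun i => ?_⟩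
    rw [map_mul, hp' i, mul_zero]

theorem La0_le : d.La0 ≤ d.La := by
  intro b hb x hx
  obtain ⟨q, hq, hq'⟩ := hb x hx
  exact ⟨q, hq, fun i j _ => by rw [hq', hq']⟩

/-- r T as a linear map -/
noncomputable def rT : BP →ₗ[ℂ] BP where
  toFun b := Polynomial.C d.r * d.T b
  map_add' a b := by rw [T_add, mul_add]
  map_smul' c b := by rw [T_smul, smul_eq, RingHom.id_apply, smul_eq]; ring

/-- multiplication by D -/
noncomputable def mD : BP →ₗ[ℂ] BP where
  toFun b := Polynomial.C d.D * b
  map_add' a b := by rw [mul_add]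
  map_smul' c b := by rw [smul_eq, RingHom.id_apply, smul_eq]; ring

theorem mD_inj : Function.Injective d.mD := fun a b hab =>
  mul_left_cancel₀ (Polynomial.C_ne_zero.mpr d.D0) hab

theorem r_ne : d.r ≠ 0 := (Polynomial.monic_prod_X_sub_C _ _).ne_zero
theorem r_deg : d.r.natDegree = d.S.card := by
  rw [r, Polynomial.natDegree_prod_of_monic _ _ (fun i _ => Polynomial.monic_X_sub_C _)]; simp

theorem r_loc (x : ℂ) (hx : x ∈ d.S) : ∃ s, th (tz x (d.N x)) d.r = PowerSeries.X ^ (d.N x) * s := by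
  obtain ⟨s, hs⟩ : (Polynomial.X - Polynomial.C x) ∣ d.r := Finset.dvd_prod_of_mem _ hx
  refine ⟨th (tz x (d.N x)) s, ?_⟩
  rw [hs, map_mul, map_sub, th_X, th_C, tz]
  congr 1
  exact add_sub_cancel_left _ _

theorem rT_loc (b : BP) (hb : b ∈ d.La) (x : ℂ) (hx : x ∈ d.S) (i) : ∃ q, d.ev x i (d.rT b) = d.eD x ^ 2 * q ∧
    PowerSeries.constantCoeff q = 0 := by
  obtain ⟨q, hq, -⟩ := hb x hx
  obtain ⟨s, hs⟩ := d.r_loc x hx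
  have h1 := d.T_pe dl (tz x (d.N x)) (d.α x i) (d.ev_F x i) b
  change d.ev x i (d.T b) * dl (tz x (d.N x)) = d.eD x * dl (d.ev x i b) - d.ev x i b * dl (d.eD x) at h1
  rw [hq i, Derivation.leibniz, dl_tz] at h1
  simp only [smul_eq_mul] at h1
  refine ⟨PowerSeries.C ((d.N x : ℂ)⁻¹) * s * dl (q i), ?_, ?_⟩
  · show d.ev x i (Polynomial.C d.r * d.T b) = _
    rw [map_mul, ev_C, hs]
    have h2 : PowerSeries.C ((d.N x : ℂ)⁻¹) * (d.N x : PowerSeries ℂ) = 1 := by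
      rw [show (d.N x : PowerSeries ℂ) = PowerSeries.C (d.N x : ℂ) by simp, ← map_mul, inv_mul_cancel₀ (by exact_mod_cast d.hN x), map_one]
    linear_combination (s * PowerSeries.C ((d.N x : ℂ)⁻¹)) * h1 - (s * PowerSeries.X ^ d.N x * d.ev x i (d.T b)) * h2
  · rw [map_mul, cc_dl, mul_zero]

theorem T_td (h : Hyp n F) (b : BP) (M : ℕ) (hM : TD b M) : TD (d.T b) (M + d.D.natDegree - 1) := by
  obtain ⟨w, hw⟩ := h.inf
  apply hw.td _ (d.T_deg h b)
  intro i
  have h1 := d.T_pe dL zL⁻¹ (zL⁻¹ * io (w i)) (hw.root i) b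
  rw [dL_zLinv] at h1
  have hb := OI_of_TD b M hM (w i)
  have hD := OI_th d.D
  have h2 : OI (-(zL * (th zL⁻¹ d.D * dL (pe zL⁻¹ (zL⁻¹ * io (w i)) b) - pe zL⁻¹ (zL⁻¹ * io (w i)) b * dL (th zL⁻¹ d.D)))) (M + d.D.natDegree - 1) := by
    have := (OI_zL.mul ((hD.mul hb.dL).sub (add_comm (M:ℤ) (d.D.natDegree:ℤ) ▸ (hb.mul hD.dL)))).neg
    convert this using 1
    ring
  rw [← h1] at h2
  have h3 : -(zL * (pe zL⁻¹ (zL⁻¹ * io (w i)) (d.T b) * -zL⁻¹)) = pe zL⁻¹ (zL⁻¹ * io (w i)) (d.T b) := by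
    have := mul_inv_cancel₀ zL_ne
    linear_combination (pe zL⁻¹ (zL⁻¹ * io (w i)) (d.T b)) * this
  rw [h3] at h2
  obtain ⟨u, hu⟩ := h2
  refine ⟨u, ?_⟩
  rw [← hu, ← zpow_natCast]
  congr 2
  have := d.Dpos
  omega

theorem rT_mem (h : Hyp n F) (M : ℕ) (b : BP) (hb : b ∈ d.La) (hM : TD b M) :
    d.rT b ∈ (d.La0 ⊓ TDs n (M + d.S.card - 1)).map d.mD := by
  have hdeg : (d.rT b).natDegree ≤ n := (Polynomial.natDegree_C_mul_le _ _).trans (d.T_deg h b)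
  obtain ⟨g, hg, hgd⟩ := d.dvd_coeff (d.rT b) hdeg (by
    intro x hx i
    obtain ⟨q, hq, -⟩ := d.rT_loc b hb x hx i
    exact ⟨q, hq⟩)
  refine ⟨g, ⟨?_, hgd, ?_⟩, hg.symm⟩
  · intro x hx
    choose q hq hq' using fun i => d.rT_loc b hb x hx i
    refine ⟨q, fun i => ?_, hq'⟩
    have := hq i
    rw [hg, map_mul, ev_CD] at this
    apply mul_left_cancel₀ (d.eD_ne x)
    rw [this]; ring
  · apply TD_of_Cmul d.D d.D0
    rw [← hg]
    refine (TD_Cmul d.r _ _ (d.T_td h b M hM)).mono ?_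
    rw [r_deg]
    have := d.Dpos
    have := d.S_pos
    omega

end Dat
end Core

namespace Core
variable {n : ℕ} {F : BP}

theorem fin_ker {V W : Type*} [AddCommGroup V] [Module ℂ V] [AddCommGroup W] [Module ℂ W] (A B : Submodule ℂ V)
    [FiniteDimensional ℂ A] [FiniteDimensional ℂ B]
    (f : V →ₗ[ℂ] W) (h : ∀ a ∈ A, f a = 0 → a ∈ B) :
    Module.finrank ℂ A ≤ Module.finrank ℂ (A.map f) + Module.finrank ℂ B := by
  have h1 := LinearMap.finrank_range_add_finrank_ker (f.domRestrict A)
  rw [LinearMap.range_domRestrict] at h1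
  rw [← h1]
  apply Nat.add_le_add_left
  let g : LinearMap.ker (f.domRestrict A) →ₗ[ℂ] B :=
    { toFun := fun a => ⟨a.1.1, h _ a.1.2 a.2⟩
      map_add' := fun _ _ => rfl
      map_smul' := fun _ _ => rfl }
  apply LinearMap.finrank_le_finrank_of_injective (f := g)
  intro a b hab
  exact Subtype.ext (Subtype.ext (congrArg (fun z : B => (z : V)) hab))

instance fin_inf (A : Submodule ℂ BP) (n M : ℕ) : FiniteDimensional ℂ (A ⊓ TDs n M : Submodule ℂ BP) :=
  Submodule.finiteDimensional_of_le inf_le_right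

theorem dim_succ (A : Submodule ℂ BP) (n M : ℕ) :
    Module.finrank ℂ (A ⊓ TDs n (M+1) : Submodule ℂ BP) ≤ Module.finrank ℂ (A ⊓ TDs n M : Submodule ℂ BP) + (n+1) := by
  let f : BP →ₗ[ℂ] (Fin (n+1) → ℂ) :=
    { toFun := fun b k => (tp (M+1) b).coeff k
      map_add' := by intro a b; ext k; simp only [coeff_tp, Pi.add_apply]; split_ifs <;> simp
      map_smul' := by intro a b; ext k; simp only [coeff_tp, Pi.smul_apply]; split_ifs <;> simp }
  have h1 := fin_ker (A ⊓ TDs n (M+1)) (A ⊓ TDs n M) f (by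
    rintro a ⟨ha, ha1, ha2⟩ h0
    refine ⟨ha, ha1, ?_⟩
    intro k j hkj
    by_cases hk : M + 1 < k + j
    · exact ha2 k j hk
    · by_cases hk2 : n < k
      · rw [Polynomial.coeff_eq_zero_of_natDegree_lt (ha1.trans_lt hk2)]; simp
      · have := congrFun h0 ⟨k, by omega⟩
        change (tp (M+1) a).coeff k = 0 at this
        rw [coeff_tp, if_pos (by omega), show M + 1 - k = j by omega] at this
        exact this)
  have h2 : Module.finrank ℂ ((A ⊓ TDs n (M+1)).map f) ≤ n + 1 := by
    have := Submodule.finrank_le ((A ⊓ TDs n (M+1)).map f)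
    simpa using this
  omega

theorem dim_add (A : Submodule ℂ BP) (n M k : ℕ) :
    Module.finrank ℂ (A ⊓ TDs n (M+k) : Submodule ℂ BP) ≤ Module.finrank ℂ (A ⊓ TDs n M : Submodule ℂ BP) + (n+1) * k := by
  induction k with
  | zero => simp
  | succ k ih =>
    have := dim_succ A n (M+k)
    rw [← add_assoc]
    calc _ ≤ _ := this
      _ ≤ _ := Nat.add_le_add_right ih _
      _ = _ := by ring

namespace Dat
variable (d : Dat n F)

/-- the fibre -/
noncomputable def fib (F : BP) (x : ℂ) : Finset ℂ := (F.map (th x)).roots.toFinset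

theorem map_cc (x : ℂ) : F.map (th x) = ∏ i, (Polynomial.X - Polynomial.C (d.c0 x i)) := by
  have := congrArg (Polynomial.map (PowerSeries.constantCoeff (R := ℂ))) (d.hα x)
  rw [Polynomial.map_map, Polynomial.map_prod] at this
  simp only [Polynomial.map_sub, Polynomial.map_X, Polynomial.map_C] at this
  show _ = ∏ i, (Polynomial.X - Polynomial.C (PowerSeries.constantCoeff (d.α x i)))
  rw [← this]
  congr 1
  apply RingHom.ext
  intro f
  rw [RingHom.comp_apply, cc_th _ _ (d.hN x), th_eval]

theorem mem_fib (x y : ℂ) : y ∈ fib F x ↔ ∃ i, d.c0 x i = y := by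
  rw [fib, d.map_cc x, Multiset.mem_toFinset, Polynomial.mem_roots (Polynomial.monic_prod_X_sub_C _ _).ne_zero,
    Polynomial.IsRoot, Polynomial.eval_prod, Finset.prod_eq_zero_iff]
  constructor
  · rintro ⟨i, -, hi⟩
    refine ⟨i, ?_⟩
    simp only [Polynomial.eval_sub, Polynomial.eval_X, Polynomial.eval_C] at hi
    exact (sub_eq_zero.mp hi).symm
  · rintro ⟨i, rfl⟩
    exact ⟨i, Finset.mem_univ _, by simp⟩

/-- interpolation -/
theorem interp (h : Hyp n F) (p : ℂ × ℂ) (hp : p.2 ∈ fib F p.1) : ∃ E : BP, E.natDegree ≤ n ∧ pe p.1 p.2 E = 1 ∧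
    ∀ x ∈ d.S, ∀ y ∈ fib F x, (x, y) ≠ p → pe x y E = 0 := by
  classical
  let A : BP := Polynomial.C (∏ x ∈ d.S.erase p.1, Polynomial.C (p.1 - x)⁻¹ * (Polynomial.X - Polynomial.C x))
  let B : BP := ∏ y ∈ (fib F p.1).erase p.2, Polynomial.C (Polynomial.C (p.2 - y)⁻¹) * (Polynomial.X - Polynomial.C (Polynomial.C y))
  refine ⟨A * B, ?_, ?_, ?_⟩
  · refine (Polynomial.natDegree_C_mul_le _ _).trans ?_
    refine (Polynomial.natDegree_prod_le _ _).trans ?_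
    have h1 : ∀ y ∈ (fib F p.1).erase p.2, (Polynomial.C (Polynomial.C (p.2 - y)⁻¹) * (Polynomial.X - Polynomial.C (Polynomial.C y))).natDegree ≤ 1 := by
      intro y _
      refine (Polynomial.natDegree_C_mul_le _ _).trans ?_
      rw [Polynomial.natDegree_X_sub_C]
    refine (Finset.sum_le_sum h1).trans ?_
    rw [Finset.sum_const, smul_eq_mul, mul_one, Finset.card_erase_of_mem hp]
    have h2 : (fib F p.1).card ≤ n + 1 := by
      refine (Multiset.toFinset_card_le _).trans ((Polynomial.card_roots' _).trans ?_)
      rw [h.monic.natDegree_map, h.deg]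
    omega
  · rw [map_mul, pe_C, map_prod, map_prod]
    rw [Finset.prod_eq_one, Finset.prod_eq_one, one_mul]
    · intro y hy
      rw [map_mul, pe_C, map_sub, pe_X, pe_C, th_C, th_C]
      exact inv_mul_cancel₀ (sub_ne_zero.mpr (Finset.ne_of_mem_erase hy).symm)
    · intro x hx
      rw [map_mul, map_sub, th_X, th_C, th_C]
      exact inv_mul_cancel₀ (sub_ne_zero.mpr (Finset.ne_of_mem_erase hx).symm)
  · intro x hx y hy hne
    rw [map_mul, pe_C, map_prod, map_prod]
    by_cases hxp : x = p.1
    · have hyp : y ≠ p.2 := fun hc => hne (Prod.ext hxp hc)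
      subst hxp
      rw [Finset.prod_eq_zero (Finset.mem_erase.mpr ⟨hyp, hy⟩) (by
        rw [map_mul, map_sub, pe_X, pe_C, pe_C, th_C, th_C]
        show _ * (y - y) = 0
        ring), mul_zero]
    · rw [Finset.prod_eq_zero (Finset.mem_erase.mpr ⟨hxp, hx⟩) (by
        rw [map_mul, map_sub, th_X, th_C, th_C]
        show _ * (x - x) = 0
        ring), zero_mul]

theorem dim_pts (h : Hyp n F) : ∃ M0, ∀ M ≥ M0, Module.finrank ℂ (d.La0 ⊓ TDs n M : Submodule ℂ BP) + ∑ x ∈ d.S, nroots F x ≤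
    Module.finrank ℂ (d.La ⊓ TDs n M : Submodule ℂ BP) := by
  classical
  let P := d.S.sigma (fun x => fib F x)
  have hE := fun p : P => d.interp h (p.1.1, p.1.2) (Finset.mem_sigma.mp p.2).2
  choose E hE1 hE2 hE3 using hE
  choose Mf hMf using fun p => exists_TD (d.mD (E p))
  refine ⟨∑ p, Mf p, ?_⟩
  intro M hM
  let e := Fintype.linearCombination ℂ (fun p => d.mD (E p))
  have he : ∀ v, e v = d.mD (∑ p, v p • E p) := by
    intro v
    rw [Fintype.linearCombination_apply, map_sum]
    exact Finset.sum_congr rfl fun p _ => (map_smul _ _ _).symm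
  have hval : ∀ (v : P → ℂ) (p : P), pe p.1.1 p.1.2 (∑ p, v p • E p) = v p := by
    intro v p
    rw [map_sum, Finset.sum_eq_single p]
    · rw [smul_eq, map_mul, pe_C, th_C, hE2]; exact mul_one _
    · intro p' _ hp'
      rw [smul_eq, map_mul, hE3 p' p.1.1 (Finset.mem_sigma.mp p.2).1 p.1.2 (Finset.mem_sigma.mp p.2).2, mul_zero]
      intro hc
      apply hp'
      apply Subtype.ext
      have h1 := congrArg Prod.fst hc
      have h2 := congrArg Prod.snd hc
      exact (Sigma.ext h1 (heq_of_eq h2)).symm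
    · simp
  have hcc : ∀ (v : P → ℂ) x i, d.ev x i (e v) = d.eD x * d.ev x i (∑ p, v p • E p) := by
    intro v x i
    rw [he]
    show d.ev x i (Polynomial.C d.D * _) = _
    rw [map_mul, ev_CD]
  have hLa : LinearMap.range e ≤ d.La ⊓ TDs n M := by
    rintro _ ⟨v, rfl⟩
    refine ⟨?_, ?_⟩
    · intro x hx
      refine ⟨fun i => d.ev x i (∑ p, v p • E p), fun i => hcc v x i, ?_⟩
      intro i j hij
      simp only [ev]
      rw [cc_pe _ _ (d.hN x), cc_pe _ _ (d.hN x)]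
      congr 2
    · rw [Fintype.linearCombination_apply]
      apply Submodule.sum_mem
      intro p _
      apply Submodule.smul_mem
      refine ⟨(Polynomial.natDegree_C_mul_le _ _).trans (hE1 p), (hMf p).mono (le_trans ?_ hM)⟩
      exact Finset.single_le_sum (f := Mf) (fun _ _ => Nat.zero_le _) (Finset.mem_univ p)
  have hzero : ∀ v, e v ∈ d.La0 → v = 0 := by
    intro v hv
    funext p
    have hx := (Finset.mem_sigma.mp p.2)
    obtain ⟨q, hq, hq'⟩ := hv p.1.1 hx.1
    obtain ⟨i, hi⟩ := (d.mem_fib _ _).mp hx.2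
    have h1 := hq i
    rw [hcc] at h1
    have h2 := mul_left_cancel₀ (d.eD_ne _) h1
    have h3 := hq' i
    rw [← h2, ev, cc_pe _ _ (d.hN _)] at h3
    rw [← hval v p, ← hi]
    exact h3
  have hinj : Function.Injective e := by
    refine (injective_iff_map_eq_zero _).mpr ?_
    intro v hv
    exact hzero v (by rw [hv]; exact Submodule.zero_mem _)
  have hdisj : (d.La0 ⊓ TDs n M) ⊓ LinearMap.range e = ⊥ := by
    rw [eq_bot_iff]
    rintro _ ⟨⟨h1, -⟩, v, rfl⟩
    rw [hzero v h1, map_zero]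
    exact Submodule.zero_mem _
  have h1 := Submodule.finrank_sup_add_finrank_inf_eq (d.La0 ⊓ TDs n M) (LinearMap.range e)
  rw [hdisj, finrank_bot, add_zero, LinearMap.finrank_range_of_inj hinj, Module.finrank_fintype_fun_eq_card, Fintype.card_coe,
    Finset.card_sigma] at h1
  show _ + ∑ x ∈ d.S, (fib F x).card ≤ _
  rw [← h1]
  apply Submodule.finrank_mono
  exact sup_le (inf_le_inf_right _ d.La0_le) hLa

end Dat
end Core

namespace Core
variable {n : ℕ} {F : BP}

theorem res_prod' {L : Type*} [CommRing L] [IsDomain L] [Algebra ℂ L] (t : L) (p g : BP) (hp : p.Monic)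
    {ι : Type*} [DecidableEq ι] (s s' : Finset ι)
    (β : ι → L) (h : p.map (th t) = ∏ i ∈ s, (Polynomial.X - Polynomial.C (β i))) 
    (hg : g.map (th t) = ∏ i ∈ s', (Polynomial.X - Polynomial.C (β i))) :
    th t (Polynomial.resultant p g p.natDegree g.natDegree) = ∏ i ∈ s, ∏ j ∈ s', (β i - β j) := by
  rw [← Polynomial.resultant_map_map]
  have hd : (∏ i ∈ s, (Polynomial.X - Polynomial.C (β i))).natDegree = p.natDegree := by
    rw [← h, hp.natDegree_map]
  have hg' : (g.map (th t)).natDegree ≤ g.natDegree := Polynomial.natDegree_map_le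
  have := Polynomial.resultant_prod_left s (fun i => Polynomial.X - Polynomial.C (β i)) (g.map (th t)) g.natDegree
    (by simp) hg'
  rw [hd] at this
  rw [h, this]
  apply Finset.prod_congr rfl
  intro i _
  rw [Polynomial.natDegree_X_sub_C, Polynomial.resultant_X_sub_C_left _ _ _ hg', hg, Polynomial.eval_prod]
  simp

theorem subprod {L : Type*} [CommRing L] [IsDomain L] {ι : Type*} [Fintype ι] [DecidableEq ι] (f g : Polynomial L) (hf : f.Monic) (hg : g.Monic)
    (β : ι → L) (h : f * g = ∏ i, (Polynomial.X - Polynomial.C (β i))) :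
    ∃ s : Finset ι, f = ∏ i ∈ s, (Polynomial.X - Polynomial.C (β i)) ∧ g = ∏ i ∈ sᶜ, (Polynomial.X - Polynomial.C (β i)) := by
  obtain ⟨t, u, b, c, h1, h2, h3, h4, h5⟩ := mul_eq_mul_prime_prod (s := Finset.univ) (x := f) (y := g) (a := 1)
    (p := fun i => Polynomial.X - Polynomial.C (β i)) (fun i _ => Polynomial.prime_X_sub_C _) (by rw [h, one_mul])
  have hu : u = tᶜ := by
    ext i
    have h6 : i ∈ t ∪ u := by rw [h1]; exact Finset.mem_univ i
    rw [Finset.mem_compl]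
    rw [Finset.mem_union] at h6
    constructor
    · intro h7 h8
      exact (Finset.disjoint_left.mp h2) h8 h7
    · intro h7; exact h6.resolve_left h7
  have hb : IsUnit b := IsUnit.of_mul_eq_one c h3.symm
  have hc : IsUnit c := IsUnit.of_mul_eq_one b (by rw [mul_comm]; exact h3.symm)
  have hb1 : b.Monic := Polynomial.Monic.of_mul_monic_right (Polynomial.monic_prod_X_sub_C β t) (by rw [← h4]; exact hf)
  have hc1 : c.Monic := Polynomial.Monic.of_mul_monic_right (Polynomial.monic_prod_X_sub_C β u) (by rw [← h5]; exact hg)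
  rw [hb1.eq_one_of_isUnit hb, one_mul] at h4
  rw [hc1.eq_one_of_isUnit hc, one_mul] at h5
  rw [hu] at h5
  exact ⟨t, h4, h5⟩

namespace Dat
variable (d : Dat n F)

/-- a nontrivial factorisation has branches of the two factors meeting -/
theorem meet (h : Hyp n F) (f g : BP) (hf : f.Monic) (hg : g.Monic) (hfg : f * g = F) (hfd : f.natDegree ≠ 0)
    (hgd : g.natDegree ≠ 0) : ∃ x i j, i ≠ j ∧ d.c0 x i = d.c0 x j ∧ d.ev x i f = 0 ∧ d.ev x j g = 0 := by
  obtain ⟨w, hw⟩ := h.inf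
  set R := Polynomial.resultant f g f.natDegree g.natDegree with hR
  obtain ⟨x, hx⟩ : ∃ x, R.eval x = 0 := by
    obtain ⟨s, hs1, hs2⟩ := subprod (f.map (th zL⁻¹)) (g.map (th zL⁻¹)) (hf.map _) (hg.map _)
      (fun i => zL⁻¹ * io (w i)) (by rw [← Polynomial.map_mul, hfg, hw.2])
    have h1 := res_prod' zL⁻¹ f g hf s sᶜ _ hs1 hs2
    rw [← hR] at h1
    have c1 : s.card = f.natDegree := by
      rw [← hf.natDegree_map (th zL⁻¹), hs1, Polynomial.natDegree_prod_of_monic _ _ (fun i _ => Polynomial.monic_X_sub_C _)]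
      simp only [Polynomial.natDegree_X_sub_C, Finset.sum_const, smul_eq_mul, mul_one]
    have c2 : sᶜ.card = g.natDegree := by
      rw [← hg.natDegree_map (th zL⁻¹), hs2, Polynomial.natDegree_prod_of_monic _ _ (fun i _ => Polynomial.monic_X_sub_C _)]
      simp only [Polynomial.natDegree_X_sub_C, Finset.sum_const, smul_eq_mul, mul_one]
    by_contra hc
    push Not at hc
    have hR0 : R.degree = 0 := by
      by_contra hd
      obtain ⟨x, hx⟩ := IsAlgClosed.exists_root R hd
      exact hc x hx
    rw [Polynomial.eq_C_of_degree_eq_zero hR0] at h1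
    rw [th_C, ← io_C] at h1
    have hne : R.coeff 0 ≠ 0 := by
      intro h0
      rw [Polynomial.eq_C_of_degree_eq_zero hR0, h0] at hc
      simp at hc
    set W := ∏ i ∈ s, ∏ j ∈ sᶜ, (w i - w j) with hW
    have h2 : io W * zL ^ 0 = io (PowerSeries.C (R.coeff 0)) * zL ^ (g.natDegree * f.natDegree) := by
      rw [h1, hW, ← c1, ← c2, pow_mul, ← Finset.prod_const, pow_zero, mul_one, ← Finset.prod_mul_distrib, map_prod]
      apply Finset.prod_congr rfl
      intro i _
      rw [← Finset.prod_const, ← Finset.prod_mul_distrib, map_prod]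
      apply Finset.prod_congr rfl
      intro j _
      rw [map_sub]
      have := inv_mul_cancel₀ zL_ne
      linear_combination (-(io (w i) - io (w j))) * this
    have h3 := io_zL_cmp _ _ _ _ (by
      rw [hW, map_prod, Finset.prod_ne_zero_iff]
      intro i hi
      rw [map_prod, Finset.prod_ne_zero_iff]
      intro j hj
      rw [map_sub, sub_ne_zero]
      intro hij
      have := hw.1 hij
      rw [this] at hi
      exact (Finset.mem_compl.mp hj) hi) (by rw [PowerSeries.constantCoeff_C]; exact hne) h2
    exact mul_ne_zero hgd hfd h3.symm
  obtain ⟨s, hs1, hs2⟩ := subprod (f.map (th (tz x (d.N x)))) (g.map (th (tz x (d.N x)))) (hf.map _) (hg.map _)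
      (d.α x) (by rw [← Polynomial.map_mul, hfg, d.hα])
  have h1 := res_prod' (tz x (d.N x)) f g hf s sᶜ _ hs1 hs2
  have h2 := congrArg PowerSeries.constantCoeff h1
  rw [← hR, cc_th _ _ (d.hN x), hx, map_prod] at h2
  obtain ⟨i, hi, h3⟩ := Finset.prod_eq_zero_iff.mp h2.symm
  rw [map_prod] at h3
  obtain ⟨j, hj, h4⟩ := Finset.prod_eq_zero_iff.mp h3
  rw [map_sub, sub_eq_zero] at h4
  refine ⟨x, i, j, ?_, h4, ?_, ?_⟩
  · rintro rfl; exact (Finset.mem_compl.mp hj) hi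
  · rw [ev, pe_apply, hs1, Polynomial.eval_prod, Finset.prod_eq_zero hi (by simp)]
  · rw [ev, pe_apply, hs2, Polynomial.eval_prod, Finset.prod_eq_zero hj (by simp)]

theorem kerT (h : Hyp n F) (b : BP) (hb : b ∈ d.La) (hdeg : b.natDegree ≤ n) (hT : d.T b = 0) :
    ∃ c : ℂ, b = Polynomial.C (Polynomial.C c * d.D) := by
  classical
  obtain ⟨w, hw⟩ := h.inf
  have hD : th zL⁻¹ d.D ≠ 0 := fun h0 => d.D0 (th_inf_inj _ h0)
  have hc : ∀ i, ∃ c : ℂ, pe zL⁻¹ (zL⁻¹ * io (w i)) b = algebraMap ℂ LS c * th zL⁻¹ d.D := by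
    intro i
    have h1 := d.T_pe dL zL⁻¹ (zL⁻¹ * io (w i)) (hw.root i) b
    rw [hT, map_zero, zero_mul] at h1
    have h2 : pe zL⁻¹ (zL⁻¹ * io (w i)) b = (pe zL⁻¹ (zL⁻¹ * io (w i)) b * (th zL⁻¹ d.D)⁻¹) * th zL⁻¹ d.D := by
      rw [mul_assoc, inv_mul_cancel₀ hD, mul_one]
    set Q := pe zL⁻¹ (zL⁻¹ * io (w i)) b * (th zL⁻¹ d.D)⁻¹ with hQ
    rw [h2, Derivation.leibniz] at h1
    simp only [smul_eq_mul] at h1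
    have h3 : th zL⁻¹ d.D * (th zL⁻¹ d.D * dL Q) = 0 := by linear_combination -h1
    have h4 := (mul_eq_zero.mp ((mul_eq_zero.mp h3).resolve_left hD)).resolve_left hD
    obtain ⟨c, hc⟩ := dL_eq_zero Q h4
    exact ⟨c, by rw [h2, hc]⟩
  choose c hc using hc
  let A : ℂ → BP := fun e => b - Polynomial.C (Polynomial.C e * d.D)
  have hA : ∀ e i, pe zL⁻¹ (zL⁻¹ * io (w i)) (A e) = algebraMap ℂ LS (c i - e) * th zL⁻¹ d.D := by
    intro e i
    simp only [A]
    rw [map_sub, hc, pe_C, map_mul, th_C, map_sub]; ring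
  by_cases hall : ∀ i, c i = c 0
  · refine ⟨c 0, ?_⟩
    have : A (c 0) = 0 := by
      apply hw.zero
      · exact (Polynomial.natDegree_sub_le _ _).trans (max_le hdeg (by rw [Polynomial.natDegree_C]; exact Nat.zero_le _))
      · intro i; rw [hA, hall i, sub_self, map_zero, zero_mul]
    exact sub_eq_zero.mp this
  exfalso
  push Not at hall
  obtain ⟨k, hk⟩ := hall
  let cs := (Finset.univ.image c).erase (c 0)
  have hdvd : F ∣ A (c 0) * ∏ e ∈ cs, A e := by
    rw [← Polynomial.modByMonic_eq_zero_iff_dvd h.monic]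
    apply hw.zero
    · have h1 : F ≠ 1 := by
        intro h1
        have := h.deg
        rw [h1] at this; simp at this
      have := Polynomial.natDegree_modByMonic_lt (A (c 0) * ∏ e ∈ cs, A e) h.monic h1
      rw [h.deg] at this
      omega
    · intro i
      have h1 : ∀ p : BP, pe zL⁻¹ (zL⁻¹ * io (w i)) (p %ₘ F) = pe zL⁻¹ (zL⁻¹ * io (w i)) p := by
        intro p
        conv_rhs => rw [← Polynomial.modByMonic_add_div p F, map_add, map_mul, hw.root, zero_mul, add_zero]
      rw [h1, map_mul, map_prod]
      by_cases hi : c i = c 0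
      · rw [hA, hi, sub_self, map_zero, zero_mul, zero_mul]
      · rw [Finset.prod_eq_zero (i := c i) (Finset.mem_erase.mpr ⟨hi, Finset.mem_image_of_mem _ (Finset.mem_univ _)⟩)
          (by rw [hA, sub_self, map_zero, zero_mul]), mul_zero]
  obtain ⟨f, g, hf, hg, hfg⟩ := exists_dvd_and_dvd_of_dvd_mul hdvd
  -- normalise
  have hlead : f.leadingCoeff * g.leadingCoeff = 1 := by
    rw [← Polynomial.leadingCoeff_mul, ← hfg]; exact h.monic
  let f' := Polynomial.C g.leadingCoeff * f
  let g' := Polynomial.C f.leadingCoeff * g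
  have hf' : f'.Monic := by
    rw [Polynomial.Monic, Polynomial.leadingCoeff_mul, Polynomial.leadingCoeff_C, mul_comm]; exact hlead
  have hg' : g'.Monic := by
    rw [Polynomial.Monic, Polynomial.leadingCoeff_mul, Polynomial.leadingCoeff_C]; exact hlead
  have hfg' : f' * g' = F := by
    have : f' * g' = Polynomial.C (f.leadingCoeff * g.leadingCoeff) * (f * g) := by
      rw [Polynomial.C_mul]; simp only [f', g']; ring
    rw [this, hlead, hfg]; simp
  have hfA : f' ∣ A (c 0) := by
    refine dvd_trans ?_ hf
    refine ⟨Polynomial.C f.leadingCoeff, ?_⟩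
    have : f' * Polynomial.C f.leadingCoeff = Polynomial.C (f.leadingCoeff * g.leadingCoeff) * f := by
      rw [Polynomial.C_mul]; simp only [f']; ring
    rw [this, hlead]; simp
  have hgA : g' ∣ ∏ e ∈ cs, A e := by
    refine dvd_trans ?_ hg
    refine ⟨Polynomial.C g.leadingCoeff, ?_⟩
    have : g' * Polynomial.C g.leadingCoeff = Polynomial.C (f.leadingCoeff * g.leadingCoeff) * g := by
      rw [Polynomial.C_mul]; simp only [g']; ring
    rw [this, hlead]; simp
  have hev0 : ∀ (p q : BP) i, p ∣ q → pe zL⁻¹ (zL⁻¹ * io (w i)) p = 0 → pe zL⁻¹ (zL⁻¹ * io (w i)) q = 0 := by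
    rintro p q i ⟨r, rfl⟩ hp
    rw [map_mul, hp, zero_mul]
  have hfd : f'.natDegree ≠ 0 := by
    intro h0
    have h1 := hf'.natDegree_eq_zero.mp h0
    rw [h1, one_mul] at hfg'
    have h2 := hev0 _ _ 0 (hfg' ▸ hgA) (hw.root 0)
    rw [map_prod] at h2
    obtain ⟨e, he, h3⟩ := Finset.prod_eq_zero_iff.mp h2
    rw [hA] at h3
    have h4 := (mul_eq_zero.mp h3).resolve_right hD
    rw [map_eq_zero_iff _ (algebraMap ℂ LS).injective, sub_eq_zero] at h4
    exact Finset.ne_of_mem_erase he h4.symm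
  have hgd : g'.natDegree ≠ 0 := by
    intro h0
    have h1 := hg'.natDegree_eq_zero.mp h0
    rw [h1, mul_one] at hfg'
    have h2 := hev0 _ _ k (hfg' ▸ hfA) (hw.root k)
    rw [hA] at h2
    have h4 := (mul_eq_zero.mp h2).resolve_right hD
    rw [map_eq_zero_iff _ (algebraMap ℂ LS).injective, sub_eq_zero] at h4
    exact hk h4
  obtain ⟨x, i, j, hij, hcc, hi, hj⟩ := d.meet h f' g' hf' hg' hfg' hfd hgd
  have hx := d.mem_S_of x i j hij hcc
  obtain ⟨q, hq, hq'⟩ := hb x hx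
  have hAq : ∀ e i, d.ev x i (A e) = d.eD x * (q i - PowerSeries.C e) := by
    intro e i
    simp only [A]
    rw [map_sub, hq, ev_C, map_mul, th_C]
    show d.eD x * q i - PowerSeries.C e * d.eD x = _
    ring
  have e1 : d.ev x i (A (c 0)) = 0 := by
    obtain ⟨r, hr⟩ := hfA
    rw [hr, map_mul, hi, zero_mul]
  have e2 : d.ev x j (∏ e ∈ cs, A e) = 0 := by
    obtain ⟨r, hr⟩ := hgA
    rw [hr, map_mul, hj, zero_mul]
  rw [hAq] at e1
  have e1 := sub_eq_zero.mp ((mul_eq_zero.mp e1).resolve_left (d.eD_ne x))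
  rw [map_prod] at e2
  obtain ⟨e, he, e2⟩ := Finset.prod_eq_zero_iff.mp e2
  rw [hAq] at e2
  have e2 := sub_eq_zero.mp ((mul_eq_zero.mp e2).resolve_left (d.eD_ne x))
  have := hq' i j hcc
  rw [e1, e2, PowerSeries.constantCoeff_C, PowerSeries.constantCoeff_C] at this
  exact Finset.ne_of_mem_erase he this.symm

end Dat
end Core

namespace Core
variable {n : ℕ} {F : BP}

namespace Dat
variable (d : Dat n F)

theorem surj (h : Hyp n F) : ∃ M0, ∀ M ≥ M0, ∀ g ∈ d.La0 ⊓ TDs n (M + d.S.card - 1), ∃ b, b.natDegree ≤ n ∧ d.rT b = d.mD g := by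
  obtain ⟨M0, hM0⟩ := d.dim_pts h
  refine ⟨M0, ?_⟩
  intro M hM
  have hS := d.S_pos
  have h1 := hM0 (M + d.S.card - 1) (by omega)
  have h2 := dim_add d.La n M (d.S.card - 1)
  rw [show M + (d.S.card - 1) = M + d.S.card - 1 by omega] at h2
  have h3 := h.defect d.S
  have h4 := fin_ker (d.La ⊓ TDs n M) (Submodule.span ℂ ({Polynomial.C d.D} : Set BP)) d.rT (by
    rintro b ⟨hb, hb1, -⟩ h0
    have hT : d.T b = 0 := (mul_eq_zero.mp h0).resolve_left (Polynomial.C_ne_zero.mpr d.r_ne)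
    obtain ⟨c, hc⟩ := d.kerT h b hb hb1 hT
    rw [Submodule.mem_span_singleton]
    exact ⟨c, by rw [hc, smul_eq, ← Polynomial.C_mul]⟩)
  have h5 : Module.finrank ℂ (Submodule.span ℂ ({Polynomial.C d.D} : Set BP)) ≤ 1 := by
    have := finrank_span_le_card (R := ℂ) ({Polynomial.C d.D} : Set BP)
    simpa using this
  have h6 : (d.La ⊓ TDs n M).map d.rT ≤ (d.La0 ⊓ TDs n (M + d.S.card - 1)).map d.mD := by
    rintro _ ⟨b, ⟨hb, -, hb2⟩, rfl⟩
    exact d.rT_mem h M b hb hb2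
  have h7 : Module.finrank ℂ ((d.La0 ⊓ TDs n (M + d.S.card - 1)).map d.mD) =
      Module.finrank ℂ (d.La0 ⊓ TDs n (M + d.S.card - 1) : Submodule ℂ BP) := 
    LinearEquiv.finrank_eq (Submodule.equivMapOfInjective d.mD d.mD_inj _).symm
  have h8 : (n+1) * d.S.card = (n+1) * (d.S.card - 1) + (n + 1) := by
    rw [← Nat.mul_succ]; congr 1; omega
  have h9 := Submodule.eq_of_le_of_finrank_le h6 (by omega)
  intro g hg
  have : d.mD g ∈ (d.La ⊓ TDs n M).map d.rT := by rw [h9]; exact ⟨g, hg, rfl⟩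
  obtain ⟨b, hb, hb2⟩ := this
  exact ⟨b, hb.2.1, hb2⟩

theorem primitive (h : Hyp n F) (j : ℕ) : ∃ b, d.T b = Polynomial.C (d.D ^ 2 * Polynomial.X ^ j) * Polynomial.X := by
  obtain ⟨M0, hM0⟩ := d.surj h
  let g : BP := Polynomial.C (d.r * d.D * Polynomial.X ^ j) * Polynomial.X
  obtain ⟨M1, hM1⟩ := exists_TD g
  obtain ⟨b, -, hb⟩ := hM0 (M0 + M1) (by omega) g ⟨by
    intro x hx
    refine ⟨fun i => th (tz x (d.N x)) d.r * th (tz x (d.N x)) (Polynomial.X ^ j) * d.α x i, ?_, ?_⟩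
    · intro i
      simp only [g]
      rw [map_mul, ev_C, map_mul, map_mul]
      show th (tz x (d.N x)) d.r * d.eD x * _ * pe _ _ Polynomial.X = _
      rw [pe_X]; ring
    · intro i
      obtain ⟨s, hs⟩ := d.r_loc x hx
      rw [hs]
      simp [d.hN x], by
      refine (Polynomial.natDegree_C_mul_le _ _).trans ?_
      rw [Polynomial.natDegree_X]; exact h.hn, hM1.mono (by have := d.S_pos; omega)⟩
  refine ⟨b, ?_⟩
  apply mul_left_cancel₀ (Polynomial.C_ne_zero.mpr d.r_ne)
  change Polynomial.C d.r * d.T b = Polynomial.C d.D * g at hb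
  rw [hb]
  simp only [g, Polynomial.C_mul, Polynomial.C_pow]
  ring
end Dat

theorem zL_pow_coeff (m : ℕ) (x : LS) : (zL ^ m * x).coeff m = x.coeff 0 := by
  rw [zL_single, HahnSeries.single_pow]
  have := HahnSeries.coeff_single_mul_add (r := (1:ℂ) ^ m) (x := x) (a := 0) (b := m • (1:ℤ))
  rw [one_pow, one_mul] at this
  rw [← this]
  simp

theorem Hyp.branch (h : Hyp n F) (w) (hw : InfData n F w) (i) (j : ℕ) : PowerSeries.coeff (j+2) (w i) = 0 := by
  obtain ⟨d⟩ := h.dat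
  obtain ⟨b, hb⟩ := d.primitive h j
  have hD : th zL⁻¹ d.D ≠ 0 := fun h0 => d.D0 (th_inf_inj _ h0)
  have h1 := d.T_pe dL zL⁻¹ (zL⁻¹ * io (w i)) (hw.root i) b
  rw [hb, map_mul, pe_C, pe_X, map_mul, map_pow, map_pow, th_X, dL_zLinv] at h1
  have h2 : pe zL⁻¹ (zL⁻¹ * io (w i)) b = (pe zL⁻¹ (zL⁻¹ * io (w i)) b * (th zL⁻¹ d.D)⁻¹) * th zL⁻¹ d.D := by
      rw [mul_assoc, inv_mul_cancel₀ hD, mul_one]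
  set Q := pe zL⁻¹ (zL⁻¹ * io (w i)) b * (th zL⁻¹ d.D)⁻¹ with hQ
  rw [h2, Derivation.leibniz] at h1
  simp only [smul_eq_mul] at h1
  have h3 : (th zL⁻¹ d.D) ^ 2 * (zL⁻¹ ^ (j+2) * io (w i) + dL Q) = 0 := by linear_combination -h1
  have h4 := (mul_eq_zero.mp h3).resolve_left (pow_ne_zero 2 hD)
  have h5 : zL ^ (j+2) * zL⁻¹ ^ (j+2) = 1 := by rw [← mul_pow, mul_inv_cancel₀ zL_ne, one_pow]
  have h6 : io (w i) = zL ^ (j+2) * (- dL Q) := by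
    linear_combination (zL ^ (j+2)) * h4 - io (w i) * h5
  have h7 := congrArg (fun x => HahnSeries.coeff x ((j+2 : ℕ) : ℤ)) h6
  rw [zL_pow_coeff, HahnSeries.coeff_neg, coeff_dL, PowerSeries.coeff_coe, if_neg (by omega), Int.natAbs_natCast] at h7
  simpa using h7

theorem Hyp.lines (h : Hyp n F) : ∃ (l m : Fin (n+1) → ℂ), Function.Injective l ∧
    F = ∏ i, (Polynomial.X - Polynomial.C (Polynomial.C (l i) * Polynomial.X + Polynomial.C (m i))) := by
  obtain ⟨w, hw⟩ := h.inf
  refine ⟨fun i => PowerSeries.constantCoeff (w i), fun i => PowerSeries.coeff 1 (w i), hw.1, ?_⟩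
  rw [← sub_eq_zero]
  apply map_inf_inj
  rw [Polynomial.map_sub, hw.2, Polynomial.map_prod, sub_eq_zero]
  apply Finset.prod_congr rfl
  intro i _
  rw [Polynomial.map_sub, Polynomial.map_X, Polynomial.map_C]
  congr 2
  have hwi : w i = PowerSeries.C (PowerSeries.constantCoeff (w i)) + PowerSeries.C (PowerSeries.coeff 1 (w i)) * PowerSeries.X := by
    ext k
    rcases k with _ | _ | k
    · simp
    · simp [PowerSeries.coeff_C]
    · rw [h.branch w hw i k, map_add, PowerSeries.coeff_succ_mul_X, PowerSeries.coeff_C, PowerSeries.coeff_C]; simp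
  conv_lhs => rw [hwi]
  rw [map_add, map_mul, map_add, map_mul, th_C, th_C, th_X, io_C, io_C]
  show zL⁻¹ * (_ + _ * zL) = _
  have := inv_mul_cancel₀ zL_ne
  linear_combination (algebraMap ℂ LS (PowerSeries.coeff 1 (w i))) * this

theorem nroots_lines (l m : Fin (n+1) → ℂ)
    (hF : F = ∏ i, (Polynomial.X - Polynomial.C (Polynomial.C (l i) * Polynomial.X + Polynomial.C (m i)))) (x : ℂ) :
    nroots F x = (Finset.univ.image (fun i => l i * x + m i)).card := by
  classical
  rw [nroots]
  congr 1
  have : F.map (th x) = ∏ i, (Polynomial.X - Polynomial.C (l i * x + m i)) := by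
    rw [hF, Polynomial.map_prod]
    apply Finset.prod_congr rfl
    intro i _
    rw [Polynomial.map_sub, Polynomial.map_X, Polynomial.map_C, map_add, map_mul, th_C, th_C, th_X]
    rfl
  ext y
  rw [this, Multiset.mem_toFinset, Polynomial.mem_roots (Polynomial.monic_prod_X_sub_C _ _).ne_zero,
    Polynomial.IsRoot, Polynomial.eval_prod, Finset.prod_eq_zero_iff, Finset.mem_image]
  simp only [Polynomial.eval_sub, Polynomial.eval_X, Polynomial.eval_C, sub_eq_zero]
  constructor
  · rintro ⟨i, hi, h⟩; exact ⟨i, hi, h.symm⟩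
  · rintro ⟨i, hi, h⟩; exact ⟨i, hi, h.symm⟩

theorem Hyp.conc (h : Hyp n F) (l m : Fin (n+1) → ℂ) (hl : Function.Injective l)
    (hF : F = ∏ i, (Polynomial.X - Polynomial.C (Polynomial.C (l i) * Polynomial.X + Polynomial.C (m i)))) :
    ∃ x0 y0, ∀ i, l i * x0 + m i = y0 := by
  classical
  -- crossing with line 0
  let xc : Fin (n+1) → ℂ := fun j => (m j - m 0) / (l 0 - l j)
  have hxc : ∀ j, j ≠ 0 → ∀ x, (l j * x + m j = l 0 * x + m 0 ↔ xc j = x) := by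
    intro j hj x
    have hne : l 0 - l j ≠ 0 := sub_ne_zero.mpr fun hc => hj (hl hc).symm
    simp only [xc]
    rw [div_eq_iff hne]
    constructor
    · intro h; linear_combination h
    · intro h; linear_combination h
  let A : ℂ → Finset (Fin (n+1)) := fun x => (Finset.univ.erase 0).filter (fun j => xc j = x)
  have hA : ∀ x j, j ∈ A x ↔ j ≠ 0 ∧ l j * x + m j = l 0 * x + m 0 := by
    intro x j
    simp only [A, Finset.mem_filter, Finset.mem_erase, Finset.mem_univ, and_true]
    constructor
    · rintro ⟨h1, h2⟩; exact ⟨h1, (hxc j h1 x).mpr h2⟩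
    · rintro ⟨h1, h2⟩; exact ⟨h1, (hxc j h1 x).mp h2⟩
  have hle : ∀ x, nroots F x + (A x).card ≤ n + 1 := by
    intro x
    rw [nroots_lines l m hF]
    have h1 : Finset.univ.image (fun i => l i * x + m i) ⊆ (A x)ᶜ.image (fun i => l i * x + m i) := by
      intro y hy
      obtain ⟨i, -, rfl⟩ := Finset.mem_image.mp hy
      by_cases hi : i ∈ A x
      · refine Finset.mem_image.mpr ⟨0, ?_, ((hA x i).mp hi).2.symm⟩
        rw [Finset.mem_compl, hA]; tauto
      · exact Finset.mem_image_of_mem _ (Finset.mem_compl.mpr hi)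
    have h2 := (Finset.card_le_card h1).trans Finset.card_image_le
    rw [Finset.card_compl, Fintype.card_fin] at h2
    have := Finset.card_le_univ (A x)
    rw [Fintype.card_fin] at this
    omega
  have hlt : ∀ x j k, j ≠ k → j ∉ A x → k ∉ A x → j ≠ 0 → k ≠ 0 → l j * x + m j = l k * x + m k →
      nroots F x + (A x).card + 1 ≤ n + 1 := by
    intro x j k hjk hj hk hj0 hk0 he
    rw [nroots_lines l m hF]
    have h1 : Finset.univ.image (fun i => l i * x + m i) ⊆ (insert k (A x))ᶜ.image (fun i => l i * x + m i) := by
      intro y hy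
      obtain ⟨i, -, rfl⟩ := Finset.mem_image.mp hy
      by_cases hi : i ∈ A x
      · refine Finset.mem_image.mpr ⟨0, ?_, ((hA x i).mp hi).2.symm⟩
        rw [Finset.mem_compl, Finset.mem_insert, hA]; tauto
      · by_cases hik : i = k
        · subst hik
          refine Finset.mem_image.mpr ⟨j, ?_, he⟩
          rw [Finset.mem_compl, Finset.mem_insert]; tauto
        · exact Finset.mem_image_of_mem _ (by rw [Finset.mem_compl, Finset.mem_insert]; tauto)
    have h2 := (Finset.card_le_card h1).trans Finset.card_image_le
    rw [Finset.card_compl, Fintype.card_fin, Finset.card_insert_of_notMem hk] at h2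
    have := Finset.card_le_univ (insert k (A x))
    rw [Fintype.card_fin, Finset.card_insert_of_notMem hk] at this
    omega
  have hsum : ∀ S : Finset ℂ, (∀ j, j ≠ 0 → xc j ∈ S) → ∑ x ∈ S, (A x).card = n := by
    intro S hS
    have := Finset.card_eq_sum_card_fiberwise (s := (Finset.univ.erase (0 : Fin (n+1)))) (t := S) (f := xc)
      (by intro j hj; exact hS j (Finset.ne_of_mem_erase hj))
    rw [Finset.card_erase_of_mem (Finset.mem_univ _), Finset.card_univ, Fintype.card_fin] at this
    rw [← this]; simp
  have key : ∀ j k, j ≠ k → j ≠ 0 → k ≠ 0 → xc j = xc k := by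
    intro j k hjk hj0 hk0
    have hne : l j - l k ≠ 0 := sub_ne_zero.mpr fun hc => hjk (hl hc)
    let x := (m k - m j) / (l j - l k)
    have hx : l j * x + m j = l k * x + m k := by
      have : x * (l j - l k) = m k - m j := div_mul_cancel₀ _ hne
      linear_combination this
    by_contra hc
    have hnj : j ∉ A x := by
      intro hj
      have h1 := (hA x j).mp hj
      have h2 := (hxc j hj0 x).mp h1.2
      have h3 := (hxc k hk0 x).mp (hx.symm.trans h1.2)
      exact hc (h2.trans h3.symm)
    have hnk : k ∉ A x := by
      intro hk
      have h1 := (hA x k).mp hk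
      have h2 := (hxc k hk0 x).mp h1.2
      have h3 := (hxc j hj0 x).mp (hx.trans h1.2)
      exact hc (h3.trans h2.symm)
    let S := insert x (Finset.univ.image xc)
    have h1 := hsum S (fun j _ => Finset.mem_insert_of_mem (Finset.mem_image_of_mem _ (Finset.mem_univ _)))
    have h2 := h.defect S
    have h3 : ∑ y ∈ S, (nroots F y + (A y).card) < ∑ y ∈ S, (n + 1) := by
      apply Finset.sum_lt_sum (fun y _ => hle y)
      exact ⟨x, Finset.mem_insert_self _ _, hlt x j k hjk hnj hnk hj0 hk0 hx⟩
    rw [Finset.sum_add_distrib, h1, Finset.sum_const, smul_eq_mul, mul_comm] at h3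
    omega
  have hn := h.hn
  let i1 : Fin (n+1) := ⟨1, by omega⟩
  have hi1 : i1 ≠ 0 := by
    intro hc
    have := congrArg Fin.val hc
    simp [i1] at this
  refine ⟨xc i1, l 0 * xc i1 + m 0, ?_⟩
  intro i
  by_cases hi : i = 0
  · rw [hi]
  · rw [hxc i hi]
    by_cases hii : i = i1
    · rw [hii]
    · exact key i i1 hii hi hi1

theorem Hyp.main (h : Hyp n F) : ∃ (x0 y0 : ℂ) (l : Fin (n+1) → ℂ),
    F = ∏ i, ((Polynomial.X - Polynomial.C (Polynomial.C y0)) - Polynomial.C (Polynomial.C (l i) * (Polynomial.X - Polynomial.C x0))) := by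
  obtain ⟨l, m, hl, hF⟩ := h.lines
  obtain ⟨x0, y0, hxy⟩ := h.conc l m hl hF
  refine ⟨x0, y0, l, ?_⟩
  rw [hF]
  apply Finset.prod_congr rfl
  intro i _
  rw [← hxy i]
  simp only [Polynomial.C_add, Polynomial.C_mul, Polynomial.C_sub]
  ring

end Core

namespace Core

section red
variable {R : Type*} [CommRing R] [Algebra ℂ R]

theorem coeff_scale (v : Fin 2 → R) (P : MvPolynomial (Fin 2) ℂ) (m : ℕ) :
    (aeval (fun i => Polynomial.X * Polynomial.C (v i)) P : Polynomial R).coeff m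
      = aeval v (homogeneousComponent m P) := by
  induction P using MvPolynomial.induction_on' with
  | monomial s a =>
    rw [homogeneousComponent_of_mem (n := s.degree) ((mem_homogeneousSubmodule _ _).mpr (isHomogeneous_monomial a rfl))]
    have h1 : (aeval (fun i => Polynomial.X * Polynomial.C (v i)) (monomial s a) : Polynomial R)
        = Polynomial.C (aeval v (monomial s a)) * Polynomial.X ^ s.degree := by
      rw [aeval_monomial, aeval_monomial, Finsupp.prod_fintype _ _ (by simp), Finsupp.prod_fintype _ _ (by simp),
        Finsupp.degree_eq_sum]
      simp only [Fin.prod_univ_two, Fin.sum_univ_two, Polynomial.C_mul, Polynomial.C_pow, mul_pow, pow_add]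
      rw [Polynomial.algebraMap_apply]
      ring
    rw [h1, Polynomial.coeff_C_mul_X_pow]
    split_ifs <;> simp
  | add p q hp hq => simp only [map_add, Polynomial.coeff_add, hp, hq]

theorem der_aeval (δ : R → R) (hadd : ∀ a b, δ (a + b) = δ a + δ b)
    (hmul : ∀ a b, δ (a * b) = a * δ b + b * δ a) (hC : ∀ c : ℂ, δ (algebraMap ℂ R c) = 0)
    (v : Fin 2 → R) (P : MvPolynomial (Fin 2) ℂ) :
    δ (aeval v P) = aeval v (pderiv 0 P) * δ (v 0) + aeval v (pderiv 1 P) * δ (v 1) := by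
  induction P using MvPolynomial.induction_on with
  | C a => simp [hC]
  | add p q hp hq => simp only [map_add, hadd, hp, hq]; ring
  | mul_X p i hp =>
    rw [map_mul, hmul, hp, aeval_X, Derivation.leibniz, Derivation.leibniz]
    fin_cases i <;> simp [pderiv_X_of_ne] <;> ring

theorem pe_aeval (t y : R) (v : Fin 2 → BP) (P : MvPolynomial (Fin 2) ℂ) :
    pe t y (aeval v P) = aeval (fun i => pe t y (v i)) P := by
  induction P using MvPolynomial.induction_on with
  | C a =>
    rw [aeval_C, aeval_C]
    show pe t y (Polynomial.C (Polynomial.C a)) = _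
    simp
  | add p q hp hq => simp only [map_add, hp, hq]
  | mul_X p i hp => rw [map_mul, map_mul, hp, aeval_X, map_mul, aeval_X]
end red

theorem Dx_mul (a b : BP) : Dx (a * b) = a * Dx b + b * Dx a := by
  rw [mul_comm b]
  ext1 k
  simp only [coeff_Dx, Polynomial.coeff_add, Polynomial.coeff_mul, Polynomial.derivative_sum,
    Polynomial.derivative_mul, Finset.sum_add_distrib]
  ring

theorem coeff_sig (b : BP) (m : ℕ) :
    (pe (Polynomial.X : BP) (Polynomial.X * Polynomial.C Polynomial.X) b).coeff m = tp m b := by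
  have key : ∀ k (c : Polynomial ℂ), (pe (Polynomial.X : BP) (Polynomial.X * Polynomial.C Polynomial.X) (Polynomial.monomial k c)).coeff m = tp m (Polynomial.monomial k c) := by
    intro k c
    ext j
    rw [coeff_tp]
    simp only [pe, Polynomial.coe_eval₂RingHom, Polynomial.eval₂_monomial, th_apply, Polynomial.coeff_monomial]
    have : (Polynomial.aeval (Polynomial.X : BP) c) = c.map Polynomial.C := rfl
    rw [this, mul_pow, ← mul_assoc, ← Polynomial.C_pow, mul_assoc, mul_comm (Polynomial.X ^ k), ← mul_assoc]
    rw [Polynomial.coeff_mul_X_pow', Polynomial.coeff_mul_C, Polynomial.coeff_map]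
    split_ifs with h1 h2 h3 <;> simp [Polynomial.coeff_C_mul, Polynomial.coeff_X_pow] 
    · rw [if_pos h3.symm, h3]
    · intro h; exact absurd h.symm h3
    · intro h; omega
    · omega
  induction b using Polynomial.induction_on' with
  | add p q hp hq =>
    rw [map_add, Polynomial.coeff_add, hp, hq]
    ext j; simp only [Polynomial.coeff_add, coeff_tp]; split_ifs <;> simp
  | monomial k c => exact key k c

theorem euler (N : ℕ) (P : MvPolynomial (Fin 2) ℂ) (hP : P.IsHomogeneous N) (x y : ℂ) :
    x * eval ![x,y] (pderiv 0 P) + y * eval ![x,y] (pderiv 1 P) = N * eval ![x,y] P := by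
  have := congrArg (eval ![x,y]) hP.sum_X_mul_pderiv
  simpa [Fin.sum_univ_two] using this

theorem exists_lead (n : ℕ) (P : MvPolynomial (Fin 2) ℂ) (hP : P.IsHomogeneous (n+1))
    (hreg : ∀ x y : ℂ, eval ![x, y] (pderiv 0 P) = 0 → eval ![x, y] (pderiv 1 P) = 0 → x = 0 ∧ y = 0) :
    ∃ c, eval ![c, 1] P ≠ 0 := by
  by_contra! h
  have hv : ∀ (c : ℂ) (Q : MvPolynomial (Fin 2) ℂ), (aeval ![Polynomial.X, 1] Q : Polynomial ℂ).eval c = eval ![c, 1] Q := by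
    intro c Q
    rw [← Polynomial.coe_evalRingHom]
    induction Q using MvPolynomial.induction_on with
    | C a => simp
    | add p q hp hq => simp only [map_add, hp, hq]
    | mul_X p i hp => rw [map_mul, map_mul, hp, map_mul]; fin_cases i <;> simp
  have h0 : (aeval ![Polynomial.X, 1] P : Polynomial ℂ) = 0 := by
    apply Polynomial.funext; intro c; rw [hv, h]; simp
  have h1 := der_aeval (fun p : Polynomial ℂ => Polynomial.derivative p) (by intros; simp) (by intros; simp; ring)
    (by intros; simp) ![Polynomial.X, 1] P
  simp [h0] at h1
  have h2 : eval ![(0:ℂ), 1] (pderiv 0 P) = 0 := by rw [← hv, ← h1]; simp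
  have h3 := euler _ P hP 0 1
  rw [h] at h3
  simp at h3
  have := hreg 0 1 h2 h3
  simp at this

section
variable (n : ℕ) (H : MvPolynomial (Fin 2) ℂ) (γ c : ℂ)

/-- the shear substitution -/
noncomputable def sv (c : ℂ) : Fin 2 → BP :=
  ![Polynomial.C Polynomial.X + Polynomial.C (Polynomial.C c) * Polynomial.X, Polynomial.X]
/-- leading coefficient -/
noncomputable def ld : ℂ := eval ![c, 1] (homogeneousComponent (n+1) H)
/-- normalised sheared polynomial -/
noncomputable def Fr : BP := Polynomial.C (Polynomial.C (ld n H c)⁻¹) * (aeval (sv c) H - Polynomial.C (Polynomial.C γ))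

theorem pe_Fr {R : Type*} [CommRing R] [Algebra ℂ R] (t y : R) :
    pe t y (Fr n H γ c) = algebraMap ℂ R (ld n H c)⁻¹ * (aeval ![t + algebraMap ℂ R c * y, y] H - algebraMap ℂ R γ) := by
  rw [Fr, map_mul, map_sub, pe_aeval, pe_C, pe_C, th_C, th_C]
  congr 4
  ext i; fin_cases i <;> simp [sv]

theorem scale_Fr {R : Type*} [CommRing R] [Algebra ℂ R] (t y : R) (m : ℕ) (hm : m ≠ 0) :
    (pe (Polynomial.X * Polynomial.C t) (Polynomial.X * Polynomial.C y) (Fr n H γ c)).coeff m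
      = algebraMap ℂ R (ld n H c)⁻¹ * aeval ![t + algebraMap ℂ R c * y, y] (homogeneousComponent m H) := by
  rw [pe_Fr, Polynomial.algebraMap_apply, Polynomial.coeff_C_mul, Polynomial.coeff_sub,
    Polynomial.algebraMap_apply (r := γ), Polynomial.coeff_C_ne_zero hm, sub_zero, ← coeff_scale]
  congr 4
  ext1 i; fin_cases i
  · simp [Polynomial.algebraMap_apply]; ring
  · simp

theorem tp_Fr (m : ℕ) (hm : m ≠ 0) : tp m (Fr n H γ c) = Polynomial.C (ld n H c)⁻¹ *
    aeval ![1 + Polynomial.C c * Polynomial.X, Polynomial.X] (homogeneousComponent m H) := by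
  have := scale_Fr n H γ c (1 : Polynomial ℂ) Polynomial.X m hm
  rw [Polynomial.C_1, mul_one, coeff_sig] at this
  exact this

theorem pe_zero (b : BP) : pe (0 : Polynomial ℂ) Polynomial.X b = b.map (Polynomial.evalRingHom 0) := by
  have : pe (0 : Polynomial ℂ) Polynomial.X = Polynomial.mapRingHom (Polynomial.evalRingHom 0) := by
    apply Polynomial.ringHom_ext
    · intro a
      rw [pe_C, th_apply]
      simp [Polynomial.aeval_def, Polynomial.eval₂_at_zero, Polynomial.coeff_zero_eq_eval_zero]
    · simp
  rw [this]; rfl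

variable {n H γ c}

theorem ev1 (l : ℂ) (Q : MvPolynomial (Fin 2) ℂ) :
    (aeval ![1 + Polynomial.C c * Polynomial.X, Polynomial.X] Q : Polynomial ℂ).eval l = eval ![1 + c * l, l] Q := by
  rw [← Polynomial.coe_evalRingHom]
  induction Q using MvPolynomial.induction_on with
  | C a => simp
  | add p q hp hq => simp only [map_add, hp, hq]
  | mul_X p i hp => rw [map_mul, map_mul, hp, map_mul]; fin_cases i <;> simp

theorem hyp_Fr (hn : 1 ≤ n) (hdeg : H.totalDegree = n + 1) (hreg : ∀ x y : ℂ,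
    eval ![x, y] (pderiv 0 (homogeneousComponent (n + 1) H)) = 0 →
    eval ![x, y] (pderiv 1 (homogeneousComponent (n + 1) H)) = 0 → x = 0 ∧ y = 0)
    (honeval : ∀ x₀ y₀ : ℂ, eval ![x₀, y₀] (pderiv 0 H) = 0 →
      eval ![x₀, y₀] (pderiv 1 H) = 0 → eval ![x₀, y₀] H = γ) (hc : ld n H c ≠ 0) : Hyp n (Fr n H γ c) := by
  have hld : (ld n H c)⁻¹ ≠ 0 := inv_ne_zero hc
  have td : TD (Fr n H γ c) (n+1) := by
    intro k j hkj
    have h1 := tp_Fr n H γ c (k+j) (by omega)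
    rw [homogeneousComponent_eq_zero _ _ (by omega), map_zero, mul_zero] at h1
    have h2 := congrArg (fun p => Polynomial.coeff p k) h1
    rw [coeff_tp] at h2
    simpa using h2
  have h1 : ((Fr n H γ c).coeff (n+1)).coeff 0 = 1 := by
    have := scale_Fr n H γ c (0 : ℂ) 1 (n+1) (by omega)
    simp only [Polynomial.C_0, mul_zero, Polynomial.C_1, mul_one, zero_add] at this
    rw [pe_zero, Polynomial.coeff_map, Polynomial.coe_evalRingHom, ← Polynomial.coeff_zero_eq_eval_zero] at this
    rw [this, MvPolynomial.aeval_eq_eval]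
    exact inv_mul_cancel₀ hc
  have h2 : (Fr n H γ c).coeff (n+1) = 1 := by
    have := td.natDegree_coeff (n+1)
    rw [Nat.sub_self, Nat.le_zero] at this
    rw [Polynomial.eq_C_of_natDegree_eq_zero this, h1, Polynomial.C_1]
  have hd : (Fr n H γ c).natDegree = n + 1 := le_antisymm td.natDegree_le
    (Polynomial.le_natDegree_of_ne_zero (by rw [h2]; exact one_ne_zero))
  refine ⟨hn, by rw [Polynomial.Monic, Polynomial.leadingCoeff, hd, h2], hd, td, ?_, ?_⟩
  · intro l
    rw [tp_Fr _ _ _ _ _ (by omega)]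
    rw [Polynomial.derivative_C_mul, Polynomial.eval_mul, Polynomial.eval_mul, Polynomial.eval_C]
    have h3 := der_aeval (fun p : Polynomial ℂ => Polynomial.derivative p) (by intros; simp) (by intros; simp; ring)
      (by intros; simp) ![1 + Polynomial.C c * Polynomial.X, Polynomial.X] (homogeneousComponent (n+1) H)
    rw [h3, ev1, Polynomial.eval_add, Polynomial.eval_mul, Polynomial.eval_mul, ev1, ev1]
    intro h4 h5
    replace h4 := (mul_eq_zero.mp h4).resolve_left hld
    replace h5 := (mul_eq_zero.mp h5).resolve_left hld
    have h6 := euler _ _ (homogeneousComponent_isHomogeneous (n+1) H) (1 + c * l) l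
    rw [h4] at h6
    simp at h5 h6
    have h7 : eval ![1 + c*l, l] (pderiv 0 (homogeneousComponent (n+1) H)) = 0 := by linear_combination h6 - l * h5
    have h8 : eval ![1 + c*l, l] (pderiv 1 (homogeneousComponent (n+1) H)) = 0 := by
      rw [h7] at h5; simpa using h5
    obtain ⟨h9, h10⟩ := hreg _ _ h7 h8
    rw [h10] at h9; simp at h9
  · intro x0 y0 hx hy
    have e : ∀ Q : MvPolynomial (Fin 2) ℂ, pe x0 y0 (aeval (sv c) Q) = eval ![x0 + c * y0, y0] Q := by
      intro Q
      rw [pe_aeval, MvPolynomial.aeval_eq_eval]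
      show eval _ Q = _
      congr 2
      ext i; fin_cases i <;> simp [sv]
    have ax := der_aeval Dx Dx_add Dx_mul (by intro a; exact (Dx_C _).trans (by simp)) (sv c) H
    have ay := der_aeval (fun p : BP => Polynomial.derivative p) (by intros; simp) (by intros; simp; ring)
      (by intro a; exact Polynomial.derivative_C) (sv c) H
    have d2 : Dx (sv c 1) = 0 := by
      show Dx Polynomial.X = 0
      rw [← Polynomial.monomial_one_one_eq_X, Dx_monomial]; simp
    have d1 : Dx (sv c 0) = 1 := by
      show Dx (Polynomial.C Polynomial.X + Polynomial.C (Polynomial.C c) * sv c 1) = 1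
      rw [Dx_add, Dx_Cmul, Dx_C, d2]; simp
    have d3 : Polynomial.derivative (sv c 0) = Polynomial.C (Polynomial.C c) := by simp [sv]
    have d4 : Polynomial.derivative (sv c 1) = 1 := by simp [sv]
    rw [Fr, Dx_Cmul, Dx_sub, ax, Dx_C, d1, d2] at hx
    rw [Fr, Polynomial.derivative_C_mul, Polynomial.derivative_sub, ay, d3, d4] at hy
    simp [e, hc] at hx hy
    rw [hx] at hy
    have := honeval _ _ hx (by simpa using hy)
    rw [Fr, map_mul, map_sub, e, this]
    simp

end

theorem final (n : ℕ) (hn : 1 ≤ n) (H : MvPolynomial (Fin 2) ℂ)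
    (hdeg : H.totalDegree = n + 1) (hreg : ∀ x y : ℂ,
    eval ![x, y] (pderiv 0 (homogeneousComponent (n + 1) H)) = 0 →
    eval ![x, y] (pderiv 1 (homogeneousComponent (n + 1) H)) = 0 → x = 0 ∧ y = 0)
    (γ : ℂ)
    (honeval : ∀ x₀ y₀ : ℂ, eval ![x₀, y₀] (pderiv 0 H) = 0 →
      eval ![x₀, y₀] (pderiv 1 H) = 0 → eval ![x₀, y₀] H = γ) :
    ∃ α β : ℂ, ∀ x y : ℂ,
      eval ![x, y] H = eval ![x + α, y + β] (homogeneousComponent (n + 1) H) + γ := by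
  obtain ⟨c, hc⟩ := exists_lead n _ (homogeneousComponent_isHomogeneous (n+1) H) hreg
  have hc' : ld n H c ≠ 0 := hc
  obtain ⟨x0, y0, l, hF⟩ := (hyp_Fr hn hdeg hreg honeval hc').main
  have A : ∀ x y : ℂ, (ld n H c)⁻¹ * eval ![x + c * y, y] (homogeneousComponent (n+1) H) = ∏ i, (y - l i * x) := by
    intro x y
    have h1 := scale_Fr n H γ c x y (n+1) (by omega)
    rw [hF, map_prod, MvPolynomial.aeval_eq_eval] at h1
    have h2 := Polynomial.coeff_prod_of_natDegree_le (s := (Finset.univ : Finset (Fin (n+1)))) 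
      (fun i => Polynomial.C (y - l i * x) * Polynomial.X + Polynomial.C (l i * x0 - y0)) 1
      (by intro i _; exact Polynomial.natDegree_linear_le)
    rw [Finset.card_univ, Fintype.card_fin, mul_one] at h2
    refine h1.symm.trans (Eq.trans ?_ (h2.trans ?_))
    · congr 1
      apply Finset.prod_congr rfl
      intro i _
      simp [Polynomial.algebraMap_apply]
      ring
    · apply Finset.prod_congr rfl
      intro i _
      simp
  have B : ∀ x y : ℂ, (ld n H c)⁻¹ * (eval ![x + c * y, y] H - γ) = ∏ i, ((y - y0) - l i * (x - x0)) := by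
    intro x y
    have h1 := pe_Fr n H γ c x y
    rw [hF, map_prod, MvPolynomial.aeval_eq_eval] at h1
    refine h1.symm.trans ?_
    apply Finset.prod_congr rfl
    intro i _
    simp
  refine ⟨-(x0 + c * y0), -y0, ?_⟩
  intro x y
  have h1 := B (x - c * y) y
  have h2 := A (x - c * y - x0) (y - y0)
  rw [← h1] at h2
  have h3 := mul_left_cancel₀ (inv_ne_zero hc') h2
  rw [show x - c * y - x0 + c * (y - y0) = x + -(x0 + c * y0) by ring, show x - c * y + c * y = x by ring] at h3
  rw [← sub_eq_add_neg y, h3]; ring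

end Core

theorem stmt10 (n : ℕ) (hn : 1 ≤ n) (H : MvPolynomial (Fin 2) ℂ)
    (hdeg : H.totalDegree = n + 1) (hreg : RegularAtInfinity n H)
    (γ : ℂ)
    (honeval : ∀ x₀ y₀ : ℂ, eval ![x₀, y₀] (pderiv 0 H) = 0 →
      eval ![x₀, y₀] (pderiv 1 H) = 0 → eval ![x₀, y₀] H = γ) :
    ∃ α β : ℂ, ∀ x y : ℂ,
      eval ![x, y] H = eval ![x + α, y + β] (homogeneousComponent (n + 1) H) + γ := by
  exact Core.final n hn H hdeg hreg γ honeval
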